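/- arXiv:2203.10915 — 3 statements merged into one kernel-verified Lean document; each statement's English description precedes it below -/
import Mathlib

section
/- Let s ∈ (1,3). Then for every Schwartz function φ on ℝ², ∫_{ℝ²} φ̂(x,t) (x⁴ + t²)^{−s/4} dx dt = ∫_{ℝ²} φ(ξ₁, ξ₂) · (2π^{s/4} |ξ₂|^{(s−2)/4} / Γ(s/4)) · [∫_ℝ e^{−2πi x ξ₁} |x|^{1−s/2} K_{(s−2)/4}(2π|ξ₂| x²) dx] dξ₁ dξ₂. That is, the distributional Fourier transform of f_s(x,t) = (x⁴+t²)^{−s/4} is represented by the function (ξ₁,ξ₂) ↦ (2π^{s/4}|ξ₂|^{(s−2)/4}/Γ(s/4)) ∫_ℝ e^{−2πixξ₁} |x|^{1−s/2} K_{(s−2)/4}(2π|ξ₂|x²) dx. -/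
/-!
The Gamma integral gives, off the `x`-axis,
`(x⁴+t²)^{-s/4} = π^{s/4}/Γ(s/4) ∫₀^∞ r^{s/4-1} e^{-πr(x⁴+t²)} dr` (`koranyiKernel_eq_integral`).
For fixed `r` the Fourier transform is moved onto `e^{-πr(x⁴+t²)}`; its `t`-factor is Gaussian, with
transform `r^{-1/2} e^{-πξ₂²/r}`, while the `x`-factor is kept as an integral
(`integral_fourier2_mul_quarticGauss`). Integrating in `r` before `x` leaves
`∫₀^∞ r^{s/4-3/2} e^{-πξ₂²/r-πrx⁴} dr = 2 |ξ₂|^{(s-2)/4} |x|^{1-s/2} K_{(s-2)/4}(2π|ξ₂|x²)`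
(`integral_heatKernel`).

Two applications of Fubini need the range `1 < s < 3`. Against `φ̂` the `r`-integral converges at
infinity when `s < 3`, since `∫ e^{-πr(x⁴+t²)}` is of size `r^{-3/4}`
(`integrable_fourier2_mul_quarticGauss`). Against `φ` the modulus integrates in `r` to a multiple of
`|ξ₂|^{(s-3)/2}`, which is locally integrable when `s > 1` (`integrable_mul_subordinated`).

The Bessel function is defined through the power series of `I_{±ν}`, so the integral representation
`K_ν(2y) = ½ y^{-ν} G_ν(y²)`, `G_μ(w) = ∫₀^∞ t^{μ-1} e^{-t-w/t} dt`, must be proved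
(`besselK_eq_macdonaldInt`). With `I_ν(z) = (z/2)^ν h_ν(z²/4)`, contiguous relations for `h` and `G`
show that `h_ν G_{ν+1} + w h_{ν+1} G_ν` is constant in `w`, with value `1` by the limit `w → 0⁺`.
The relations for `ν` and `-ν`, the symmetry `G_ν = w^ν G_{-ν}` and the Wronskian of `h_ν`, `h_{-ν}`
then determine `G_ν` for non-integer `ν`. Continuity of `G` in its order gives the case `ν = 0`,
that is `s = 2`.
-/

open Filter Set MeasureTheory
open scoped Real Classical

/-- The modified Bessel function of the first kind
`I_ν(z) = Σ_{n=0}^∞ (z/2)^{ν+2n} / (n! Γ(n+ν+1))`, with the principal branch of powers.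
(When `ν` is a negative integer the terms with `n + ν + 1 ≤ 0` vanish, since Mathlib's
`Complex.Gamma` vanishes at nonpositive integers, implementing the convention that the sum
starts at `n = -ν`.) -/
noncomputable def besselI (ν z : ℂ) : ℂ :=
  ∑' n : ℕ, (z / 2) ^ (ν + 2 * (n : ℂ)) / ((n.factorial : ℂ) * Complex.Gamma ((n : ℂ) + ν + 1))

/-- The modified Bessel function of the second kind:
`K_ν = (π / (2 sin (νπ))) (I_{-ν} - I_ν)` for non-integer `ν`, and for integer `ν` the limit
of this expression as the order tends to `ν`. -/

noncomputable def besselK (ν z : ℂ) : ℂ :=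
  if ∃ n : ℤ, ν = (n : ℂ) then
    limUnder (nhdsWithin ν {ν}ᶜ)
      (fun μ => ((Real.pi : ℂ) / (2 * Complex.sin (μ * (Real.pi : ℂ)))) *
        (besselI (-μ) z - besselI μ z))
  else ((Real.pi : ℂ) / (2 * Complex.sin (ν * (Real.pi : ℂ)))) * (besselI (-ν) z - besselI ν z)

/-- The Korányi kernel `f_s(x,t) = (x⁴ + t²)^{-s/4}` on `ℝ²`. -/
noncomputable def koranyiKernel (s : ℝ) (p : ℝ × ℝ) : ℝ :=
  (p.1 ^ 4 + p.2 ^ 2) ^ (-(s / 4))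

/-- The Euclidean Fourier transform on `ℝ²`: `φ̂(ξ) = ∫ e^{-2πi⟨p,ξ⟩} φ(p) dp`. -/
noncomputable def fourier2 (φ : (ℝ × ℝ) → ℂ) (ξ : ℝ × ℝ) : ℂ :=
  ∫ p : ℝ × ℝ,
    Complex.exp (-2 * (Real.pi : ℂ) * Complex.I * ((p.1 : ℂ) * (ξ.1 : ℂ) + (p.2 : ℂ) * (ξ.2 : ℂ)))
      * φ p

/-! ### The power series of the modified Bessel functions -/

/-- The entire function `h_ν(w) = Σ wⁿ / (n! Γ(n+ν+1))`, so that `I_ν(z) = (z/2)^ν h_ν(z²/4)`. -/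
noncomputable def besselSeries (ν w : ℂ) : ℂ :=
  ∑' n : ℕ, w ^ n / ((n.factorial : ℂ) * Complex.Gamma ((n : ℂ) + ν + 1))

lemma exists_norm_inv_Gamma_le (ν : ℂ) :
    ∃ C : ℝ, ∀ n : ℕ, ‖(Complex.Gamma ((n : ℂ) + ν + 1))⁻¹‖ ≤ C := by
  obtain ⟨N, hN⟩ := exists_nat_ge (‖ν‖)
  have hstep : ∀ n : ℕ, N ≤ n → ‖(Complex.Gamma (((n + 1 : ℕ) : ℂ) + ν + 1))⁻¹‖
      ≤ ‖(Complex.Gamma ((n : ℂ) + ν + 1))⁻¹‖ := by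
    intro n hn
    have h1 : (1 : ℝ) ≤ ‖(n : ℂ) + ν + 1‖ := by
      have h2 : ‖((n : ℂ) + 1)‖ ≤ ‖(n : ℂ) + ν + 1‖ + ‖ν‖ := by
        calc ‖((n : ℂ) + 1)‖ = ‖((n : ℂ) + ν + 1) - ν‖ := by ring_nf
          _ ≤ _ := norm_sub_le _ _
      have h3 : ‖((n : ℂ) + 1)‖ = n + 1 := by
        rw [← Nat.cast_succ, Complex.norm_natCast]; push_cast; ring
      have h4 : (N : ℝ) ≤ n := by exact_mod_cast hn
      linarith
    have h0 : (n : ℂ) + ν + 1 ≠ 0 := by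
      intro h; rw [h] at h1; simp at h1; linarith
    have h5 : ((n + 1 : ℕ) : ℂ) + ν + 1 = ((n : ℂ) + ν + 1) + 1 := by push_cast; ring
    rw [h5, Complex.Gamma_add_one _ h0, norm_inv, norm_inv, norm_mul, mul_inv]
    exact mul_le_of_le_one_left (by positivity) (inv_le_one_of_one_le₀ h1)
  refine ⟨∑ k ∈ Finset.range (N + 1), ‖(Complex.Gamma ((k : ℂ) + ν + 1))⁻¹‖, fun n => ?_⟩
  have hsmall : ∀ m ≤ N, ‖(Complex.Gamma ((m : ℂ) + ν + 1))⁻¹‖ ≤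
      ∑ k ∈ Finset.range (N + 1), ‖(Complex.Gamma ((k : ℂ) + ν + 1))⁻¹‖ := fun m hm =>
    Finset.single_le_sum (f := fun k : ℕ => ‖(Complex.Gamma ((k : ℂ) + ν + 1))⁻¹‖)
      (fun _ _ => norm_nonneg _) (Finset.mem_range.2 (by omega))
  rcases le_total n N with h | h
  · exact hsmall n h
  · induction n, h using Nat.le_induction with
    | base => exact hsmall N le_rfl
    | succ n hn ih => exact (hstep n hn).trans ih

lemma besselSeries_term_norm_le {ν : ℂ} {C : ℝ}
    (hC : ∀ n : ℕ, ‖(Complex.Gamma ((n : ℂ) + ν + 1))⁻¹‖ ≤ C) (w : ℂ) (n : ℕ) :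
    ‖w ^ n / ((n.factorial : ℂ) * Complex.Gamma ((n : ℂ) + ν + 1))‖
      ≤ C * (‖w‖ ^ n / n.factorial) := by
  rw [div_eq_mul_inv, mul_inv, norm_mul, norm_mul, norm_pow, norm_inv, Complex.norm_natCast]
  calc ‖w‖ ^ n * ((n.factorial : ℝ)⁻¹ * ‖(Complex.Gamma ((n : ℂ) + ν + 1))⁻¹‖)
      ≤ ‖w‖ ^ n * ((n.factorial : ℝ)⁻¹ * C) := by gcongr; exact hC n
    _ = _ := by ring

lemma summable_besselSeries (ν w : ℂ) :
    Summable fun n : ℕ => w ^ n / ((n.factorial : ℂ) * Complex.Gamma ((n : ℂ) + ν + 1)) := by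
  obtain ⟨C, hC⟩ := exists_norm_inv_Gamma_le ν
  exact Summable.of_norm_bounded ((Real.summable_pow_div_factorial ‖w‖).mul_left C)
    (fun n => besselSeries_term_norm_le hC w n)

lemma hasDerivAt_besselSeries (ν w : ℂ) :
    HasDerivAt (besselSeries ν) (besselSeries (ν + 1) w) w := by
  obtain ⟨C, hC⟩ := exists_norm_inv_Gamma_le (ν + 1)
  have hterm : ∀ (n : ℕ) (y : ℂ), HasDerivAt
      (fun y : ℂ => y ^ n / ((n.factorial : ℂ) * Complex.Gamma ((n : ℂ) + ν + 1)))
      ((n : ℂ) * y ^ (n - 1) / ((n.factorial : ℂ) * Complex.Gamma ((n : ℂ) + ν + 1))) y :=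
    fun n y => (hasDerivAt_pow n y).div_const _
  have hshift : ∀ (n : ℕ) (y : ℂ), (((n + 1 : ℕ) : ℂ)) * y ^ (n + 1 - 1) /
      (((n + 1).factorial : ℂ) * Complex.Gamma (((n + 1 : ℕ) : ℂ) + ν + 1)) =
      y ^ n / ((n.factorial : ℂ) * Complex.Gamma ((n : ℂ) + (ν + 1) + 1)) := by
    intro n y
    have h1 : ((n + 1 : ℕ) : ℂ) ≠ 0 := Nat.cast_ne_zero.2 (by omega)
    have h2 : ((n + 1 : ℕ) : ℂ) + ν + 1 = (n : ℂ) + (ν + 1) + 1 := by push_cast; ring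
    rw [h2, Nat.factorial_succ, Nat.cast_mul, Nat.add_sub_cancel, mul_assoc,
      mul_div_mul_left _ _ h1]
  set R : ℝ := ‖w‖ + 1
  let u : ℕ → ℝ := fun n => match n with
    | 0 => 0
    | n + 1 => C * (R ^ n / n.factorial)
  have hu : Summable u := by
    rw [← summable_nat_add_iff 1]
    exact (Real.summable_pow_div_factorial R).mul_left C
  have hC0 : 0 ≤ C := (norm_nonneg _).trans (hC 0)
  have key := hasDerivAt_tsum_of_isPreconnected (t := Metric.ball (0 : ℂ) R) (y₀ := w) (y := w)
    hu Metric.isOpen_ball (convex_ball _ _).isPreconnected (fun n y _ => hterm n y)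
    (fun n y hy => ?_) (by simp [R]) (summable_besselSeries ν w) (by simp [R])
  · have hs' : Summable fun n : ℕ => ((n : ℂ) * w ^ (n - 1) /
        ((n.factorial : ℂ) * Complex.Gamma ((n : ℂ) + ν + 1))) := by
      rw [← summable_nat_add_iff 1]
      exact (summable_besselSeries (ν + 1) w).congr (fun n => (hshift n w).symm)
    rw [hs'.tsum_eq_zero_add, tsum_congr (fun n => hshift n w)] at key
    rw [Nat.cast_zero, zero_mul, zero_div, zero_add] at key
    exact key
  · cases n with
    | zero => simp [u]
    | succ n =>
      rw [hshift n y]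
      refine (besselSeries_term_norm_le hC y n).trans ?_
      have : ‖y‖ ≤ R := by simpa using (mem_ball_zero_iff.1 hy).le
      simp only [u]
      gcongr

/-- The contiguous relation `h_ν = w h_{ν+2} + (ν+1) h_{ν+1}`. -/
lemma besselSeries_recurrence (ν w : ℂ) :
    besselSeries ν w = w * besselSeries (ν + 2) w + (ν + 1) * besselSeries (ν + 1) w := by
  have hs2 : HasSum (fun n : ℕ => (n : ℂ) * w ^ n /
      ((n.factorial : ℂ) * Complex.Gamma ((n : ℂ) + (ν + 1) + 1)))
      (w * besselSeries (ν + 2) w) := by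
    have hterm : ∀ n : ℕ, (((n + 1 : ℕ) : ℂ)) * w ^ (n + 1) / (((n + 1).factorial : ℂ) *
        Complex.Gamma (((n + 1 : ℕ) : ℂ) + (ν + 1) + 1)) =
        w * (w ^ n / ((n.factorial : ℂ) * Complex.Gamma ((n : ℂ) + (ν + 2) + 1))) := by
      intro n
      have h1 : ((n + 1 : ℕ) : ℂ) ≠ 0 := Nat.cast_ne_zero.2 (by omega)
      have h2 : ((n + 1 : ℕ) : ℂ) + (ν + 1) + 1 = (n : ℂ) + (ν + 2) + 1 := by push_cast; ring
      rw [h2, Nat.factorial_succ, Nat.cast_mul, mul_assoc, mul_div_mul_left _ _ h1, pow_succ]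
      ring
    rw [← hasSum_nat_add_iff' 1]
    simp only [hterm]
    rw [Finset.sum_range_one, Nat.cast_zero, zero_mul, zero_div, sub_zero]
    exact (summable_besselSeries (ν + 2) w).hasSum.mul_left w
  have hs1 := ((summable_besselSeries (ν + 1) w).hasSum.mul_left (ν + 1))
  refine Eq.trans (tsum_congr fun n => ?_) (hs2.add hs1).tsum_eq
  have h := Complex.one_div_Gamma_eq_self_mul_one_div_Gamma_add_one ((n : ℂ) + ν + 1)
  rw [show (n : ℂ) + ν + 1 + 1 = (n : ℂ) + (ν + 1) + 1 by ring] at h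
  simp only [div_eq_mul_inv, mul_inv]
  rw [h]
  ring

lemma besselSeries_zero (ν : ℂ) : besselSeries ν 0 = (Complex.Gamma (ν + 1))⁻¹ := by
  rw [besselSeries, tsum_eq_single 0 (fun n hn => by simp [hn])]
  simp

/-- The Wronskian relation of the two series, the analogue of
`I_ν I_{-ν-1} - I_{-ν} I_{ν+1} = -2 sin(νπ)/(πz)`. -/
lemma besselSeries_wronskian (ν w : ℂ) :
    besselSeries ν w * besselSeries (-ν - 1) w -
      w * besselSeries (-ν) w * besselSeries (ν + 1) w = -(Complex.sin (Real.pi * ν) / Real.pi) := by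
  set W : ℂ → ℂ := fun w => besselSeries ν w * besselSeries (-ν - 1) w -
      w * besselSeries (-ν) w * besselSeries (ν + 1) w
  have hd : ∀ w, HasDerivAt W 0 w := by
    intro w
    have h1 := hasDerivAt_besselSeries ν w
    have h2 := hasDerivAt_besselSeries (-ν - 1) w
    have h3 := hasDerivAt_besselSeries (-ν) w
    have h4 := hasDerivAt_besselSeries (ν + 1) w
    have r1 := besselSeries_recurrence ν w
    have r2 := besselSeries_recurrence (-ν - 1) w
    have e1 : -ν - 1 + 2 = -ν + 1 := by ring
    have e2 : -ν - 1 + 1 = -ν := by ring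
    have e3 : ν + 1 + 1 = ν + 2 := by ring
    rw [e1, e2] at r2
    rw [e2] at h2
    rw [e3] at h4
    refine ((h1.mul h2).sub (((hasDerivAt_id w).mul h3).mul h4)).congr_deriv ?_
    simp only [id, Pi.mul_apply]
    rw [r1, r2]; ring
  have hc : W w = W 0 := is_const_of_deriv_eq_zero (fun w => (hd w).differentiableAt)
    (fun w => (hd w).deriv) w 0
  change W w = _
  rw [hc]
  simp only [W, besselSeries_zero, zero_mul, sub_zero]
  have h := Complex.Gamma_mul_Gamma_one_sub (-ν)
  rw [show (1 : ℂ) - -ν = ν + 1 by ring] at h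
  rw [show -ν - 1 + 1 = -ν by ring, ← mul_inv, mul_comm, h]
  rw [show (Real.pi : ℂ) * -ν = -(Real.pi * ν) by ring, Complex.sin_neg]
  rw [inv_div]; ring

lemma besselI_eq_besselSeries (ν : ℂ) {y : ℝ} (hy : 0 < y) :
    besselI ν (2 * y : ℝ) = (y : ℂ) ^ ν * besselSeries ν ((y ^ 2 : ℝ) : ℂ) := by
  rw [besselI, besselSeries, ← tsum_mul_left]
  refine tsum_congr fun n => ?_
  have hy' : (y : ℂ) ≠ 0 := by exact_mod_cast hy.ne'
  have h1 : ((2 * y : ℝ) : ℂ) / 2 = y := by push_cast; ring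
  rw [h1, Complex.cpow_add _ _ hy', mul_div_assoc]
  congr 2
  rw [show (2 * (n : ℂ)) = ((2 * n : ℕ) : ℂ) by push_cast; ring, Complex.cpow_natCast, pow_mul]
  push_cast; rfl

/-! ### The Macdonald integral and its identification with `K_ν` -/

/-- The weight `e^{-t-w/t}`. -/
noncomputable def macdonaldWeight (w t : ℝ) : ℂ := ((Real.exp (-t - w / t) : ℝ) : ℂ)

/-- The Macdonald integral `G_μ(w) = ∫₀^∞ t^{μ-1} e^{-t-w/t} dt`, a Mellin transform. -/
noncomputable def macdonaldInt (μ : ℂ) (w : ℝ) : ℂ := mellin (macdonaldWeight w) μ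

lemma macdonaldInt_eq (μ : ℂ) (w : ℝ) :
    macdonaldInt μ w = ∫ t in Ioi (0 : ℝ), (t : ℂ) ^ (μ - 1) * macdonaldWeight w t := rfl

lemma norm_macdonaldWeight (w t : ℝ) : ‖macdonaldWeight w t‖ = Real.exp (-t - w / t) := by
  rw [macdonaldWeight, Complex.norm_real, Real.norm_of_nonneg (Real.exp_pos _).le]

lemma continuousOn_macdonaldWeight (w : ℝ) : ContinuousOn (macdonaldWeight w) (Ioi 0) := by
  refine Complex.continuous_ofReal.comp_continuousOn (Real.continuous_exp.comp_continuousOn ?_)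
  exact continuousOn_id.neg.sub (continuousOn_const.div continuousOn_id fun t ht => ne_of_gt ht)

lemma continuousOn_cpow_mul_weight (μ : ℂ) (w : ℝ) :
    ContinuousOn (fun t : ℝ => (t : ℂ) ^ μ * macdonaldWeight w t) (Ioi 0) := by
  refine ContinuousOn.mul ?_ (continuousOn_macdonaldWeight w)
  intro t ht
  exact (Complex.continuousAt_ofReal_cpow_const t μ (Or.inr (ne_of_gt ht))).continuousWithinAt

lemma macdonaldWeight_isBigO_top {w : ℝ} (hw : 0 < w) :
    macdonaldWeight w =O[atTop] fun t => Real.exp (-1 * t) := by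
  refine Asymptotics.IsBigO.of_bound 1 ?_
  filter_upwards [eventually_gt_atTop 0] with t ht
  rw [norm_macdonaldWeight, one_mul, Real.norm_of_nonneg (Real.exp_pos _).le]
  have : 0 < w / t := by positivity
  exact Real.exp_le_exp.2 (by linarith)

lemma macdonaldWeight_isBigO_zero {w : ℝ} (hw : 0 < w) (n : ℕ) :
    macdonaldWeight w =O[nhdsWithin 0 (Ioi 0)] fun t => t ^ (-(-(n : ℝ))) := by
  refine Asymptotics.IsBigO.of_bound (n.factorial / w ^ n) ?_
  filter_upwards [self_mem_nhdsWithin] with t ht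
  have ht : 0 < t := ht
  rw [norm_macdonaldWeight, neg_neg, Real.rpow_natCast, Real.norm_of_nonneg (by positivity)]
  have h := Real.pow_div_factorial_le_exp (w / t) (by positivity) n
  have h2 : 0 < (w / t) ^ n / n.factorial := by positivity
  calc Real.exp (-t - w / t) ≤ Real.exp (-(w / t)) := Real.exp_le_exp.2 (by linarith)
    _ = (Real.exp (w / t))⁻¹ := Real.exp_neg _
    _ ≤ ((w / t) ^ n / n.factorial)⁻¹ := inv_anti₀ h2 h
    _ = _ := by rw [div_pow]; field_simp

lemma mellinConvergent_macdonaldWeight {w : ℝ} (hw : 0 < w) (μ : ℂ) :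
    MellinConvergent (macdonaldWeight w) μ := by
  obtain ⟨n, hn⟩ := exists_nat_gt (-μ.re)
  exact mellinConvergent_of_isBigO_rpow_exp one_pos
    ((continuousOn_macdonaldWeight w).locallyIntegrableOn measurableSet_Ioi)
    (macdonaldWeight_isBigO_top hw) (macdonaldWeight_isBigO_zero hw n) (by linarith)

lemma differentiableAt_macdonaldInt {w : ℝ} (hw : 0 < w) (μ : ℂ) :
    DifferentiableAt ℂ (fun μ => macdonaldInt μ w) μ := by
  obtain ⟨n, hn⟩ := exists_nat_gt (-μ.re)
  exact mellin_differentiableAt_of_isBigO_rpow_exp one_pos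
    ((continuousOn_macdonaldWeight w).locallyIntegrableOn measurableSet_Ioi)
    (macdonaldWeight_isBigO_top hw) (macdonaldWeight_isBigO_zero hw n) (by linarith)

lemma integrableOn_macdonald {w : ℝ} (hw : 0 < w) (μ : ℂ) :
    IntegrableOn (fun t : ℝ => (t : ℂ) ^ μ * macdonaldWeight w t) (Ioi 0) := by
  have h := mellinConvergent_macdonaldWeight hw (μ + 1)
  simpa [MellinConvergent] using h

/-- The substitution `t ↦ w/t` gives `G_μ(w) = w^μ G_{-μ}(w)`. -/
lemma macdonaldInt_symm {w : ℝ} (hw : 0 < w) (μ : ℂ) :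
    macdonaldInt μ w = (w : ℂ) ^ μ * macdonaldInt (-μ) w := by
  have h1 : macdonaldInt μ w = mellin (fun t => macdonaldWeight w (w * t⁻¹)) μ := by
    refine setIntegral_congr_fun measurableSet_Ioi fun t ht => ?_
    have ht : 0 < t := ht
    have : -(w * t⁻¹) - w / (w * t⁻¹) = -t - w / t := by field_simp; ring
    simp only [macdonaldWeight, this]
  rw [h1, mellin_comp_inv (fun t => macdonaldWeight w (w * t)) μ, mellin_comp_mul_left _ _ hw,
    neg_neg, smul_eq_mul, macdonaldInt]

lemma hasDerivAt_macdonaldInt {w : ℝ} (hw : 0 < w) (μ : ℂ) :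
    HasDerivAt (macdonaldInt μ) (-macdonaldInt (μ - 1) w) w := by
  have hmeas : ∀ (ν : ℂ) (v : ℝ), AEStronglyMeasurable
      (fun t : ℝ => (t : ℂ) ^ ν * macdonaldWeight v t) (volume.restrict (Ioi 0)) :=
    fun ν v => (continuousOn_cpow_mul_weight ν v).aestronglyMeasurable measurableSet_Ioi
  have key := (hasDerivAt_integral_of_dominated_loc_of_deriv_le (𝕜 := ℝ)
    (μ := volume.restrict (Ioi (0 : ℝ))) (x₀ := w) (s := Ioi (w / 2))
    (F := fun v t => (t : ℂ) ^ (μ - 1) * macdonaldWeight v t)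
    (F' := fun v t => -((t : ℂ) ^ (μ - 1 - 1) * macdonaldWeight v t))
    (bound := fun t => ‖(t : ℂ) ^ (μ - 1 - 1) * macdonaldWeight (w / 2) t‖)
    (Ioi_mem_nhds (by linarith)) (Eventually.of_forall fun v => hmeas _ v)
    (integrableOn_macdonald hw _) (hmeas _ w).neg ?_
    (integrableOn_macdonald (half_pos hw) _).norm ?_).2
  · refine key.congr_deriv ?_
    rw [integral_neg, macdonaldInt_eq]
  · filter_upwards [ae_restrict_mem measurableSet_Ioi] with t ht v hv
    have ht : 0 < t := ht
    have hv : w / 2 < v := hv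
    rw [norm_neg, norm_mul, norm_mul, norm_macdonaldWeight, norm_macdonaldWeight]
    have : w / 2 / t ≤ v / t := by gcongr
    gcongr
  · filter_upwards [ae_restrict_mem measurableSet_Ioi] with t ht v hv
    have ht : 0 < t := ht
    have h1 : HasDerivAt (fun v : ℝ => Real.exp (-t - v / t))
        (Real.exp (-t - v / t) * (-(1 / t))) v :=
      (((hasDerivAt_id v).div_const t).const_sub (-t)).exp
    refine ((h1.ofReal_comp).const_mul ((t : ℂ) ^ (μ - 1))).congr_deriv ?_
    have ht' : (t : ℂ) ≠ 0 := by exact_mod_cast ht.ne'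
    rw [Complex.cpow_sub (μ - 1) 1 ht', Complex.cpow_one, macdonaldWeight]
    push_cast
    ring

lemma norm_cpow_mul_weight {t : ℝ} (ht : 0 < t) (μ : ℂ) (w : ℝ) :
    ‖(t : ℂ) ^ μ * macdonaldWeight w t‖ = t ^ μ.re * Real.exp (-t - w / t) := by
  rw [norm_mul, norm_macdonaldWeight, Complex.norm_cpow_eq_rpow_re_of_pos ht]

/-- Integration by parts: `G_{μ+1} = μ G_μ + w G_{μ-1}`. -/
lemma macdonaldInt_recurrence {w : ℝ} (hw : 0 < w) (μ : ℂ) :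
    macdonaldInt (μ + 1) w = μ * macdonaldInt μ w + w * macdonaldInt (μ - 1) w := by
  have i1 := (integrableOn_macdonald hw (μ - 1)).const_mul μ
  have i2 := (integrableOn_macdonald hw (μ - 1 - 1)).const_mul (w : ℂ)
  have i3 := integrableOn_macdonald hw (μ + 1 - 1)
  have e : ∀ t : ℝ, 0 < t → (μ * (t : ℂ) ^ (μ - 1)) * macdonaldWeight w t +
      (t : ℂ) ^ μ * (macdonaldWeight w t * ((-1 + w / t ^ 2 : ℝ) : ℂ)) =
      μ * ((t : ℂ) ^ (μ - 1) * macdonaldWeight w t) +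
      w * ((t : ℂ) ^ (μ - 1 - 1) * macdonaldWeight w t) -
      (t : ℂ) ^ (μ + 1 - 1) * macdonaldWeight w t := by
    intro t ht
    have ht' : (t : ℂ) ≠ 0 := by exact_mod_cast ht.ne'
    rw [Complex.cpow_sub (μ - 1) 1 ht', Complex.cpow_sub μ 1 ht', Complex.cpow_one,
      add_sub_cancel_right]
    push_cast
    field_simp
    ring
  have key := integral_Ioi_deriv_mul_eq_sub (a := (0 : ℝ)) (a' := (0 : ℂ)) (b' := (0 : ℂ))
    (u := fun t : ℝ => (t : ℂ) ^ μ) (u' := fun t : ℝ => μ * (t : ℂ) ^ (μ - 1))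
    (v := macdonaldWeight w)
    (v' := fun t => macdonaldWeight w t * ((-1 + w / t ^ 2 : ℝ) : ℂ)) ?_ ?_ ?_ ?_ ?_
  · rw [setIntegral_congr_fun measurableSet_Ioi (fun t ht => e t ht)] at key
    rw [integral_sub (by exact i1.add i2) i3, integral_add i1 i2, integral_const_mul,
      integral_const_mul] at key
    rw [macdonaldInt_eq, macdonaldInt_eq, macdonaldInt_eq]
    linear_combination -key
  · intro t ht
    have ht : 0 < t := ht
    by_cases hμ : μ = 0
    · subst hμ; simpa using hasDerivAt_const t (1 : ℂ)
    · exact hasDerivAt_ofReal_cpow_const ht.ne' hμ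
  · intro t ht
    have ht : 0 < t := ht
    have h1 : HasDerivAt (fun t : ℝ => -t - w / t) (-1 + w / t ^ 2) t := by
      have := (hasDerivAt_id t).neg.sub ((hasDerivAt_const t w).div (hasDerivAt_id t) ht.ne')
      refine this.congr_deriv ?_
      simp only [id]; ring
    refine (h1.exp.ofReal_comp).congr_deriv ?_
    rw [macdonaldWeight]; push_cast; ring
  · have i4 : IntegrableOn _ _ _ := (i1.add i2).sub i3
    exact i4.congr_fun (fun t ht => (e t ht).symm) measurableSet_Ioi
  · rw [tendsto_zero_iff_norm_tendsto_zero]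
    have h := (tendsto_rpow_mul_exp_neg_mul_atTop_nhds_zero (-μ.re) w hw).comp
      tendsto_inv_nhdsGT_zero
    refine squeeze_zero' (Eventually.of_forall fun _ => norm_nonneg _) ?_ h
    filter_upwards [self_mem_nhdsWithin] with t ht
    have ht : 0 < t := ht
    rw [Pi.mul_apply, norm_cpow_mul_weight ht]
    simp only [Function.comp]
    rw [Real.inv_rpow ht.le, Real.rpow_neg ht.le, inv_inv]
    gcongr
    rw [div_eq_mul_inv]; linarith
  · rw [tendsto_zero_iff_norm_tendsto_zero]
    refine squeeze_zero' (Eventually.of_forall fun _ => norm_nonneg _) ?_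
      (tendsto_rpow_mul_exp_neg_mul_atTop_nhds_zero μ.re 1 one_pos)
    filter_upwards [eventually_gt_atTop 0] with t ht
    rw [Pi.mul_apply, norm_cpow_mul_weight ht]
    have : 0 < w / t := by positivity
    gcongr
    linarith

lemma integrableOn_rpow_mul_exp_neg {a : ℝ} (ha : -1 < a) :
    IntegrableOn (fun t : ℝ => t ^ a * Real.exp (-t)) (Ioi 0) := by
  have h := Real.GammaIntegral_convergent (s := a + 1) (by linarith)
  refine h.congr_fun (fun t _ => ?_) measurableSet_Ioi
  rw [add_sub_cancel_right, mul_comm]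

lemma tendsto_macdonaldInt_zero {ν : ℂ} (hν : -1 < ν.re) :
    Tendsto (macdonaldInt (ν + 1)) (nhdsWithin 0 (Ioi 0)) (nhds (Complex.Gamma (ν + 1))) := by
  rw [Complex.Gamma_eq_integral (by simp; linarith), Complex.GammaIntegral]
  refine tendsto_integral_filter_of_dominated_convergence
    (fun t => t ^ ν.re * Real.exp (-t)) (Eventually.of_forall fun w =>
      (continuousOn_cpow_mul_weight _ w).aestronglyMeasurable measurableSet_Ioi) ?_
    (integrableOn_rpow_mul_exp_neg hν) ?_
  · filter_upwards [self_mem_nhdsWithin] with w hw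
    have hw : 0 < w := hw
    filter_upwards [ae_restrict_mem measurableSet_Ioi] with t ht
    have ht : 0 < t := ht
    have : 0 < w / t := by positivity
    rw [smul_eq_mul, norm_cpow_mul_weight ht, add_sub_cancel_right]
    gcongr
    linarith
  · filter_upwards [ae_restrict_mem measurableSet_Ioi] with t ht
    have hc : Continuous fun w : ℝ => (t : ℂ) ^ (ν + 1 - 1) * macdonaldWeight w t := by
      unfold macdonaldWeight; fun_prop
    have := (hc.tendsto 0).mono_left (nhdsWithin_le_nhds (s := Ioi 0))
    refine this.trans_eq ?_
    simp [macdonaldWeight, mul_comm]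

lemma tendsto_mul_macdonaldInt_zero {ν : ℂ} (hν : -1 < ν.re) :
    Tendsto (fun w : ℝ => (w : ℂ) * macdonaldInt ν w) (nhdsWithin 0 (Ioi 0)) (nhds 0) := by
  have h : Tendsto (fun w : ℝ => ∫ t in Ioi (0 : ℝ),
      (w : ℂ) * ((t : ℂ) ^ (ν - 1) * macdonaldWeight w t)) (nhdsWithin 0 (Ioi 0))
      (nhds (∫ t in Ioi (0 : ℝ), (0 : ℂ))) := by
    refine tendsto_integral_filter_of_dominated_convergence
      (fun t => t ^ ν.re * Real.exp (-t)) (Eventually.of_forall fun w =>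
        ((continuousOn_cpow_mul_weight _ w).aestronglyMeasurable measurableSet_Ioi).const_mul _) ?_
      (integrableOn_rpow_mul_exp_neg hν) ?_
    · filter_upwards [self_mem_nhdsWithin] with w hw
      have hw : 0 < w := hw
      filter_upwards [ae_restrict_mem measurableSet_Ioi] with t ht
      have ht : 0 < t := ht
      -- `(w/t) e^{-w/t} ≤ 1`
      have h1 : w / t * Real.exp (-(w / t)) ≤ 1 := by
        have h2 := Real.add_one_le_exp (w / t)
        rw [Real.exp_neg, ← div_eq_mul_inv, div_le_one (Real.exp_pos _)]
        linarith
      rw [norm_mul, norm_cpow_mul_weight ht, Complex.norm_real, Real.norm_of_nonneg hw.le,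
        Complex.sub_re, Complex.one_re, Real.rpow_sub_one ht.ne', sub_eq_add_neg, Real.exp_add]
      calc w * (t ^ ν.re / t * (Real.exp (-t) * Real.exp (-(w / t))))
          = t ^ ν.re * Real.exp (-t) * (w / t * Real.exp (-(w / t))) := by ring
        _ ≤ t ^ ν.re * Real.exp (-t) * 1 := by gcongr
        _ = _ := mul_one _
    · filter_upwards [ae_restrict_mem measurableSet_Ioi] with t ht
      have hc : Continuous fun w : ℝ =>
          (w : ℂ) * ((t : ℂ) ^ (ν - 1) * macdonaldWeight w t) := by
        unfold macdonaldWeight; fun_prop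
      have := (hc.tendsto 0).mono_left (nhdsWithin_le_nhds (s := Ioi 0))
      exact this.trans_eq (by simp)
  rw [integral_zero] at h
  refine h.congr fun w => ?_
  rw [integral_const_mul, macdonaldInt_eq]

/-- Cross-product relation between the series and the Macdonald integral; the left side has zero
derivative in `w`, and its value is found by letting `w → 0⁺`. -/
lemma besselSeries_mul_macdonaldInt {ν : ℂ} (hν : -1 < ν.re) {w : ℝ} (hw : 0 < w) :
    besselSeries ν w * macdonaldInt (ν + 1) w +
      besselSeries (ν + 1) w * (w * macdonaldInt ν w) = 1 := by
  set Q : ℝ → ℂ := fun w => besselSeries ν w * macdonaldInt (ν + 1) w +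
      besselSeries (ν + 1) w * (w * macdonaldInt ν w) with hQ
  have hd : ∀ w ∈ Ioi (0 : ℝ), HasDerivAt Q 0 w := by
    intro w hw
    have h1 := (hasDerivAt_besselSeries ν w).comp_ofReal
    have h2 := (hasDerivAt_besselSeries (ν + 1) w).comp_ofReal
    have h3 := hasDerivAt_macdonaldInt hw (ν + 1)
    have h4 := hasDerivAt_macdonaldInt hw ν
    have h5 : HasDerivAt (fun w : ℝ => (w : ℂ)) 1 w := Complex.ofRealCLM.hasDerivAt
    have r1 := besselSeries_recurrence ν w
    have r2 := macdonaldInt_recurrence hw ν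
    rw [add_sub_cancel_right] at h3
    rw [show ν + 1 + 1 = ν + 2 by ring] at h2
    refine ((h1.mul h3).add (h2.mul (h5.mul h4))).congr_deriv ?_
    simp only [Pi.mul_apply]
    rw [r1, r2]; ring
  obtain ⟨a, ha⟩ := isOpen_Ioi.exists_is_const_of_deriv_eq_zero (isPreconnected_Ioi (a := (0 : ℝ)))
    (fun w hw => (hd w hw).differentiableAt.differentiableWithinAt) (fun w hw => (hd w hw).deriv)
  have hcont : ∀ ν : ℂ, Tendsto (fun w : ℝ => besselSeries ν w) (nhdsWithin 0 (Ioi 0))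
      (nhds (besselSeries ν 0)) := fun ν => by
    have h := (hasDerivAt_besselSeries ν ((0 : ℝ) : ℂ)).comp_ofReal.continuousAt.tendsto
    simpa using h.mono_left (nhdsWithin_le_nhds (s := Ioi 0))
  have hlim : Tendsto Q (nhdsWithin 0 (Ioi 0))
      (nhds (besselSeries ν 0 * Complex.Gamma (ν + 1) + besselSeries (ν + 1) 0 * 0)) :=
    ((hcont ν).mul (tendsto_macdonaldInt_zero hν)).add
      ((hcont (ν + 1)).mul (tendsto_mul_macdonaldInt_zero hν))
  have hlim2 : Tendsto Q (nhdsWithin 0 (Ioi 0)) (nhds a) :=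
    tendsto_const_nhds.congr' (by filter_upwards [self_mem_nhdsWithin] with w hw using (ha w hw).symm)
  have h := tendsto_nhds_unique hlim2 hlim
  rw [besselSeries_zero, mul_zero, add_zero, inv_mul_cancel₀
    (Complex.Gamma_ne_zero_of_re_pos (by simp; linarith))] at h
  exact (ha w hw).trans h

/-- Eliminating `G_{ν+1}` between the cross-product relations for `ν` and `-ν` expresses `G_ν`
through the two series. -/
lemma macdonaldInt_eq_besselSeries {ν : ℂ} (hν : |ν.re| < 1) (hs : Complex.sin (Real.pi * ν) ≠ 0)
    {w : ℝ} (hw : 0 < w) :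
    macdonaldInt ν w = Real.pi / Complex.sin (Real.pi * ν) *
      (besselSeries (-ν) w - (w : ℂ) ^ ν * besselSeries ν w) := by
  obtain ⟨hν1, hν2⟩ := abs_lt.1 hν
  have hw' : (w : ℂ) ≠ 0 := by exact_mod_cast hw.ne'
  have q1 := besselSeries_mul_macdonaldInt hν1 hw
  have q2 := besselSeries_mul_macdonaldInt (ν := -ν) (by simp; linarith) hw
  have r1 := macdonaldInt_recurrence hw (-ν)
  have r2 := besselSeries_recurrence (-ν - 1) w
  rw [show -ν - 1 + 2 = -ν + 1 by ring, show -ν - 1 + 1 = -ν by ring] at r2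
  have s1 := macdonaldInt_symm hw ν
  have s2 := macdonaldInt_symm hw (ν + 1)
  rw [show -(ν + 1) = -ν - 1 by ring, Complex.cpow_add _ _ hw', Complex.cpow_one] at s2
  have W := besselSeries_wronskian ν w
  have hpi : (Real.pi : ℂ) ≠ 0 := by exact_mod_cast Real.pi_ne_zero
  have q3 : besselSeries (-ν) w * macdonaldInt (ν + 1) w +
      besselSeries (-ν - 1) w * macdonaldInt ν w = (w : ℂ) ^ ν := by
    rw [s1, s2, r2]
    rw [r1] at q2
    linear_combination (w : ℂ) ^ ν * q2
  have q4 : macdonaldInt ν w * -(Complex.sin (Real.pi * ν) / Real.pi) =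
      (w : ℂ) ^ ν * besselSeries ν w - besselSeries (-ν) w := by
    rw [← W]
    linear_combination besselSeries ν w * q3 - besselSeries (-ν) w * q1
  field_simp at q4 ⊢
  linear_combination -q4

lemma besselK_formula_eq {ν : ℂ} (hν : |ν.re| < 1) (hs : Complex.sin (ν * Real.pi) ≠ 0)
    {y : ℝ} (hy : 0 < y) :
    (Real.pi : ℂ) / (2 * Complex.sin (ν * Real.pi)) *
      (besselI (-ν) (2 * y : ℝ) - besselI ν (2 * y : ℝ)) =
      (y : ℂ) ^ (-ν) * macdonaldInt ν (y ^ 2) / 2 := by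
  have hy' : (y : ℂ) ≠ 0 := by exact_mod_cast hy.ne'
  rw [mul_comm ν] at hs ⊢
  rw [macdonaldInt_eq_besselSeries hν hs (by positivity), besselI_eq_besselSeries _ hy,
    besselI_eq_besselSeries _ hy]
  have h1 : ((y ^ 2 : ℝ) : ℂ) ^ ν = (y : ℂ) ^ ν * (y : ℂ) ^ ν := by
    rw [sq, Complex.ofReal_mul, Complex.mul_cpow_ofReal_nonneg hy.le hy.le]
  have h2 : (y : ℂ) ^ (-ν) * (y : ℂ) ^ ν = 1 := by
    rw [← Complex.cpow_add _ _ hy']; simp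
  rw [h1]
  field_simp
  linear_combination (y : ℂ) ^ ν * besselSeries ν ((y ^ 2 : ℝ) : ℂ) * h2

lemma sin_mul_pi_ne_zero {ν : ℂ} (hν : ∀ n : ℤ, ν ≠ n) : Complex.sin (ν * Real.pi) ≠ 0 := by
  intro h
  obtain ⟨k, hk⟩ := Complex.sin_eq_zero_iff.1 h
  have hpi : (Real.pi : ℂ) ≠ 0 := by exact_mod_cast Real.pi_ne_zero
  exact hν k (mul_right_cancel₀ hpi hk)

/-- The integral representation of `K_ν` for real `|ν| < 1`. At `ν = 0` the limit defining `K_0` is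
computed from the continuity of the Macdonald integral in its order. -/
lemma besselK_eq_macdonaldInt {ν : ℝ} (hν : |ν| < 1) {y : ℝ} (hy : 0 < y) :
    besselK ν (2 * y : ℝ) = (y : ℂ) ^ (-(ν : ℂ)) * macdonaldInt ν (y ^ 2) / 2 := by
  have hy' : (y : ℂ) ≠ 0 := by exact_mod_cast hy.ne'
  by_cases h : ∃ n : ℤ, (ν : ℂ) = n
  · rw [besselK, if_pos h]
    have h0 : ν = 0 := by
      obtain ⟨n, hn⟩ := h
      have hn' : ν = n := by exact_mod_cast hn
      rw [hn'] at hν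
      have : |n| < 1 := by exact_mod_cast hν
      rw [hn', Int.abs_lt_one_iff.1 this]; simp
    subst h0
    refine Tendsto.limUnder_eq ?_
    have hc : ContinuousAt (fun μ : ℂ => (y : ℂ) ^ (-μ) * macdonaldInt μ (y ^ 2) / 2)
        ((0 : ℝ) : ℂ) := by
      have h1 : ContinuousAt (fun μ : ℂ => (y : ℂ) ^ (-μ)) ((0 : ℝ) : ℂ) :=
        (continuousAt_const_cpow hy').comp continuous_neg.continuousAt
      exact (h1.mul (differentiableAt_macdonaldInt (by positivity) _).continuousAt).div_const 2
    refine (hc.tendsto.mono_left nhdsWithin_le_nhds).congr' ?_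
    have hball : Metric.ball (0 : ℂ) 1 ∈ nhdsWithin ((0 : ℝ) : ℂ) {((0 : ℝ) : ℂ)}ᶜ :=
      nhdsWithin_le_nhds (by simpa using Metric.ball_mem_nhds (0 : ℂ) one_pos)
    filter_upwards [self_mem_nhdsWithin, hball] with μ hμ0 hμ
    have hμ : ‖μ‖ < 1 := by simpa using hμ
    refine (besselK_formula_eq ((Complex.abs_re_le_norm μ).trans_lt hμ)
      (sin_mul_pi_ne_zero fun n hn => hμ0 ?_) hy).symm
    have : |n| < 1 := by
      rw [hn, Complex.norm_intCast] at hμ; exact_mod_cast hμ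
    rw [Int.abs_lt_one_iff.1 this] at hn
    simpa using hn
  · rw [besselK, if_neg h]
    exact besselK_formula_eq (by simpa using hν) (sin_mul_pi_ne_zero fun n hn => h ⟨n, hn⟩) hy

/-! ### Scaling, integrability, and the Bessel kernel as an `r`-integral -/

lemma integrable_exp_neg_pi_pow_four : Integrable fun x : ℝ => Real.exp (-(π * x ^ 4)) := by
  refine ((integrable_exp_neg_mul_sq (b := 2 * π) (by positivity)).const_mul (Real.exp π)).mono'
    (by fun_prop) (Eventually.of_forall fun x => ?_)
  rw [Real.norm_of_nonneg (Real.exp_pos _).le, ← Real.exp_add, Real.exp_le_exp]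
  nlinarith [Real.pi_pos, mul_nonneg Real.pi_pos.le (sq_nonneg (x ^ 2 - 1))]

lemma exp_quartic_scale {r : ℝ} (hr : 0 < r) (x : ℝ) :
    Real.exp (-(π * r * x ^ 4)) = Real.exp (-(π * (r ^ (1 / 4 : ℝ) * x) ^ 4)) := by
  have : (r ^ (1 / 4 : ℝ)) ^ 4 = r := by
    rw [← Real.rpow_natCast, ← Real.rpow_mul hr.le]; norm_num
  rw [mul_pow, this, mul_assoc]

lemma integrable_exp_quartic {r : ℝ} (hr : 0 < r) :
    Integrable fun x : ℝ => Real.exp (-(π * r * x ^ 4)) := by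
  simp only [exp_quartic_scale hr]
  exact integrable_exp_neg_pi_pow_four.comp_mul_left' (by positivity)

lemma integral_exp_quartic {r : ℝ} (hr : 0 < r) :
    ∫ x : ℝ, Real.exp (-(π * r * x ^ 4)) =
      r ^ (-(1 / 4) : ℝ) * ∫ x : ℝ, Real.exp (-(π * x ^ 4)) := by
  simp only [exp_quartic_scale hr]
  rw [Measure.integral_comp_mul_left (fun x => Real.exp (-(π * x ^ 4))), smul_eq_mul,
    abs_of_pos (by positivity), Real.rpow_neg hr.le]

lemma integrableOn_rpow_mul_exp_neg_inv {q : ℝ} (hq : q < -1) :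
    IntegrableOn (fun r : ℝ => r ^ q * Real.exp (-(π / r))) (Ioi 0) := by
  have h := integrableOn_rpow_mul_exp_neg_mul_rpow (p := 1) (s := -q - 2) (b := π)
    (by linarith) one_pos Real.pi_pos
  rw [← integrableOn_Ioi_comp_rpow_iff' _ (p := -1) (by norm_num)] at h
  refine h.congr_fun (fun r hr => ?_) measurableSet_Ioi
  have hr : 0 < r := hr
  simp only [smul_eq_mul, Real.rpow_one]
  rw [← Real.rpow_mul hr.le, ← mul_assoc, ← Real.rpow_add hr, Real.rpow_neg_one, div_eq_mul_inv]
  congr 2 <;> ring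

lemma rpow_mul_exp_inv_scale {q b : ℝ} (hb : b ≠ 0) {r : ℝ} (hr : 0 < r) :
    r ^ q * Real.exp (-(π * b ^ 2 / r)) =
      (b ^ 2) ^ q * (((b ^ 2)⁻¹ * r) ^ q * Real.exp (-(π / ((b ^ 2)⁻¹ * r)))) := by
  have hb2 : 0 < b ^ 2 := by positivity
  rw [Real.mul_rpow (by positivity) hr.le, Real.inv_rpow hb2.le]
  have : π / ((b ^ 2)⁻¹ * r) = π * b ^ 2 / r := by field_simp
  rw [this]
  have h2 : (b ^ 2) ^ q ≠ 0 := by positivity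
  field_simp

lemma integrableOn_rpow_mul_exp_inv {q b : ℝ} (hq : q < -1) (hb : b ≠ 0) :
    IntegrableOn (fun r : ℝ => r ^ q * Real.exp (-(π * b ^ 2 / r))) (Ioi 0) := by
  have hb2 : 0 < (b ^ 2)⁻¹ := by positivity
  have h := (integrableOn_Ioi_comp_mul_left_iff
    (fun r : ℝ => r ^ q * Real.exp (-(π / r))) 0 hb2).2
    (by simpa using integrableOn_rpow_mul_exp_neg_inv hq)
  refine IntegrableOn.congr_fun (Integrable.const_mul h ((b ^ 2) ^ q)) (fun r hr => ?_)
    measurableSet_Ioi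
  exact (rpow_mul_exp_inv_scale hb hr).symm

lemma integral_rpow_mul_exp_inv {q b : ℝ} (hb : b ≠ 0) :
    ∫ r in Ioi (0 : ℝ), r ^ q * Real.exp (-(π * b ^ 2 / r)) =
      |b| ^ (2 * (q + 1)) * ∫ r in Ioi (0 : ℝ), r ^ q * Real.exp (-(π / r)) := by
  have hb2 : 0 < b ^ 2 := by positivity
  rw [setIntegral_congr_fun measurableSet_Ioi
    (fun r hr => rpow_mul_exp_inv_scale (q := q) hb hr), integral_const_mul,
    integral_comp_mul_left_Ioi (fun r : ℝ => r ^ q * Real.exp (-(π / r))) 0 (inv_pos.2 hb2),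
    mul_zero, smul_eq_mul, inv_inv, ← mul_assoc]
  congr 1
  rw [← Real.rpow_add_one hb2.ne', ← sq_abs, ← Real.rpow_natCast, ← Real.rpow_mul (abs_nonneg b)]
  norm_num

/-- The function `r^{s/4-3/2} e^{-πb²/r} e^{-πrx⁴}`, whose `r`-integral is a Bessel `K` and whose
Fourier transform in `x` is `subordinated s (·, b) r`. -/
noncomputable def heatKernel (s b r x : ℝ) : ℝ :=
  r ^ (s / 4 - 3 / 2) * Real.exp (-(π * b ^ 2 / r)) * Real.exp (-(π * r * x ^ 4))

/-- The substitution `t = πx⁴r` turns the integral into `G_ν(w)` with `ν = (s-2)/4`,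
`w = (π|b|x²)²`. -/
lemma integral_heatKernel {s b x : ℝ} (hs : s ∈ Set.Ioo (1 : ℝ) 3) (hb : b ≠ 0) (hx : x ≠ 0) :
    ∫ r in Ioi (0 : ℝ), (heatKernel s b r x : ℂ) =
      ((2 * |b| ^ ((s - 2) / 4) * |x| ^ (1 - s / 2) : ℝ) : ℂ) *
        besselK (((s - 2) / 4 : ℝ) : ℂ) ((2 * π * |b| * x ^ 2 : ℝ) : ℂ) := by
  obtain ⟨hs1, hs3⟩ := hs
  set ν : ℝ := (s - 2) / 4 with hνdef
  have hb' : 0 < |b| := abs_pos.2 hb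
  have hx' : 0 < |x| := abs_pos.2 hx
  have hy : 0 < π * |b| * x ^ 2 := by positivity
  have hB : 0 < π * x ^ 4 := by positivity
  have hν : |ν| < 1 := by rw [abs_lt]; constructor <;> linarith
  rw [show 2 * π * |b| * x ^ 2 = 2 * (π * |b| * x ^ 2) by ring, besselK_eq_macdonaldInt hν hy]
  have h1 : ∫ r in Ioi (0 : ℝ), (heatKernel s b r x : ℂ) =
      mellin (fun r => macdonaldWeight ((π * |b| * x ^ 2) ^ 2) (π * x ^ 4 * r)) ν := by
    refine setIntegral_congr_fun measurableSet_Ioi fun r hr => ?_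
    have hr : 0 < r := hr
    have e1 : -(π * x ^ 4 * r) - (π * |b| * x ^ 2) ^ 2 / (π * x ^ 4 * r) =
        -(π * b ^ 2 / r) + -(π * r * x ^ 4) := by
      rw [mul_pow, mul_pow, sq_abs]; field_simp; ring
    have e2 : ((r : ℂ) ^ ((ν : ℂ) - 1)) = ((r ^ (s / 4 - 3 / 2) : ℝ) : ℂ) := by
      rw [Complex.ofReal_cpow hr.le]; congr 1; rw [hνdef]; push_cast; ring
    simp only [macdonaldWeight, smul_eq_mul]
    rw [e1, e2, Real.exp_add, heatKernel]
    push_cast; ring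
  rw [h1, mellin_comp_mul_left _ _ hB, smul_eq_mul]
  change _ * macdonaldInt ν _ = _
  have e3 : ((π * x ^ 4 : ℝ) : ℂ) ^ (-(ν : ℂ)) =
      (((π * x ^ 4) ^ (-ν) : ℝ) : ℂ) := by rw [Complex.ofReal_cpow hB.le]; push_cast; rfl
  have e4 : ((π * |b| * x ^ 2 : ℝ) : ℂ) ^ (-(ν : ℂ)) =
      (((π * |b| * x ^ 2) ^ (-ν) : ℝ) : ℂ) := by rw [Complex.ofReal_cpow hy.le]; push_cast; rfl
  have e5 : (π * x ^ 4) ^ (-ν) =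
      |b| ^ ν * |x| ^ (1 - s / 2) * (π * |b| * x ^ 2) ^ (-ν) := by
    have p1 : 0 < |b| ^ ν := by positivity
    have h4 : (x ^ 4) ^ (-ν) = |x| ^ (4 * (-ν)) := by
      rw [← Even.pow_abs (n := 4) (by decide), ← Real.rpow_natCast, ← Real.rpow_mul hx'.le]; norm_num
    have h2 : (x ^ 2) ^ (-ν) = |x| ^ (2 * (-ν)) := by
      rw [← Even.pow_abs (n := 2) (by decide), ← Real.rpow_natCast, ← Real.rpow_mul hx'.le]; norm_num
    rw [Real.mul_rpow (by positivity) (by positivity), Real.mul_rpow (by positivity) (by positivity),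
      Real.mul_rpow (by positivity) (by positivity), h4, h2,
      show 1 - s / 2 = 2 * (-ν) by rw [hνdef]; ring, show 4 * (-ν) = 2 * (-ν) + 2 * (-ν) by ring,
      Real.rpow_add hx', Real.rpow_neg hb'.le]
    field_simp
  rw [e3, e4, e5]
  push_cast
  ring

lemma integrable_abs_rpow_div {β : ℝ} (hβ : -1 < β) (hβ0 : β ≤ 0) :
    Integrable fun t : ℝ => |t| ^ β * (1 + t ^ 2)⁻¹ := by
  have h0 : IntervalIntegrable (fun t : ℝ => |t| ^ β) volume 0 1 := by
    refine (intervalIntegral.intervalIntegrable_rpow' hβ).congr ?_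
    intro t ht
    rw [uIoc_of_le zero_le_one] at ht
    simp only [abs_of_pos ht.1]
  have h1 : IntervalIntegrable (fun t : ℝ => |t| ^ β) volume (-1) 0 := by
    rw [IntervalIntegrable.iff_comp_neg]
    simpa using h0.symm
  have h2 : IntegrableOn (fun t : ℝ => |t| ^ β) (Ioc (-1) 1) :=
    (intervalIntegrable_iff_integrableOn_Ioc_of_le (by norm_num)).1 (h1.trans h0)
  refine (((integrable_indicator_iff measurableSet_Ioc).2 h2).add
    integrable_inv_one_add_sq).mono' (by fun_prop) (Eventually.of_forall fun t => ?_)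
  have hp : 0 ≤ |t| ^ β := by positivity
  have hi : (1 + t ^ 2)⁻¹ ≤ 1 := inv_le_one_of_one_le₀ (by nlinarith [sq_nonneg t])
  have hi0 : 0 ≤ (1 + t ^ 2)⁻¹ := by positivity
  rw [Real.norm_of_nonneg (by positivity), Pi.add_apply]
  by_cases ht : t ∈ Ioc (-1 : ℝ) 1
  · rw [indicator_of_mem ht]
    nlinarith
  · rw [indicator_of_notMem ht, zero_add]
    have h1t : 1 ≤ |t| := by
      by_contra h
      push Not at h
      exact ht ⟨(abs_lt.1 h).1, (abs_lt.1 h).2.le⟩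
    exact mul_le_of_le_one_left hi0 (Real.rpow_le_one_of_one_le_of_nonpos h1t hβ0)

lemma schwartz_norm_le (φ : SchwartzMap (ℝ × ℝ) ℂ) :
    ∃ C : ℝ, ∀ ξ : ℝ × ℝ, ‖φ ξ‖ ≤ C * ((1 + ξ.1 ^ 2)⁻¹ * (1 + ξ.2 ^ 2)⁻¹) := by
  refine ⟨2 ^ 4 * (Finset.Iic ((4, 0) : ℕ × ℕ)).sup
    (fun m => SchwartzMap.seminorm ℝ m.1 m.2) φ, fun ξ => ?_⟩
  have h := SchwartzMap.one_add_le_sup_seminorm_apply (𝕜 := ℝ) (m := (4, 0)) le_rfl le_rfl φ ξ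
  rw [norm_iteratedFDeriv_zero] at h
  rw [← mul_inv, ← div_eq_mul_inv, le_div_iff₀ (by positivity), mul_comm]
  refine le_trans ?_ h
  have a1 : |ξ.1| ≤ ‖ξ‖ := norm_fst_le ξ
  have a2 : |ξ.2| ≤ ‖ξ‖ := norm_snd_le ξ
  have b1 : 1 + ξ.1 ^ 2 ≤ (1 + ‖ξ‖) ^ 2 := by
    rw [← sq_abs]; nlinarith [abs_nonneg ξ.1]
  have b2 : 1 + ξ.2 ^ 2 ≤ (1 + ‖ξ‖) ^ 2 := by
    rw [← sq_abs]; nlinarith [abs_nonneg ξ.2]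
  calc (1 + ξ.1 ^ 2) * (1 + ξ.2 ^ 2) * ‖φ ξ‖
      ≤ (1 + ‖ξ‖) ^ 2 * (1 + ‖ξ‖) ^ 2 * ‖φ ξ‖ := by gcongr
    _ = (1 + ‖ξ‖) ^ 4 * ‖φ ξ‖ := by ring

lemma schwartz_integrable_mul_abs_rpow (φ : SchwartzMap (ℝ × ℝ) ℂ) {β : ℝ} (hβ : -1 < β)
    (hβ0 : β ≤ 0) : Integrable fun ξ : ℝ × ℝ => ‖φ ξ‖ * |ξ.2| ^ β := by
  obtain ⟨C, hC⟩ := schwartz_norm_le φ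
  have h := (integrable_inv_one_add_sq.mul_prod (integrable_abs_rpow_div hβ hβ0)).const_mul C
  refine Integrable.mono' h ?_ (Eventually.of_forall fun ξ => ?_)
  · have h1 : Measurable fun ξ : ℝ × ℝ => |ξ.2| ^ β := by fun_prop
    exact φ.continuous.norm.aestronglyMeasurable.mul h1.aestronglyMeasurable
  · rw [Real.norm_of_nonneg (by positivity)]
    calc ‖φ ξ‖ * |ξ.2| ^ β ≤ C * ((1 + ξ.1 ^ 2)⁻¹ * (1 + ξ.2 ^ 2)⁻¹) * |ξ.2| ^ β := by
          gcongr; exact hC ξ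
      _ = _ := by ring

/-! ### The Fourier transform against `e^{-πr(x⁴+t²)}` -/

/-- `fourier2 φ` is a Schwartz function after transport to the Euclidean plane; only its
continuity and integrability are needed. -/
lemma fourier2_continuous_integrable (φ : SchwartzMap (ℝ × ℝ) ℂ) :
    Continuous (fourier2 fun q => φ q) ∧ Integrable (fourier2 fun q => φ q) := by
  let e := WithLp.prodContinuousLinearEquiv 2 ℝ ℝ ℝ
  let ψ : SchwartzMap (WithLp 2 (ℝ × ℝ)) ℂ := SchwartzMap.compCLMOfContinuousLinearEquiv ℂ e φ
  let F : SchwartzMap (WithLp 2 (ℝ × ℝ)) ℂ := FourierTransform.fourier ψ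
  have hF : (fourier2 fun q => φ q) = fun ξ => F (WithLp.toLp 2 ξ) := by
    funext ξ
    have h1 : F (WithLp.toLp 2 ξ) = _ :=
      Real.fourier_eq' (ψ : WithLp 2 (ℝ × ℝ) → ℂ) (WithLp.toLp 2 ξ)
    rw [h1, ← (WithLp.volume_preserving_toLp ℝ ℝ).integral_comp
      (MeasurableEquiv.toLp 2 (ℝ × ℝ)).measurableEmbedding, fourier2]
    refine integral_congr_ae (Eventually.of_forall fun p => ?_)
    have h2 : ψ (WithLp.toLp 2 p) = φ p := rfl
    simp only [h2, smul_eq_mul, WithLp.prod_inner_apply]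
    congr 2
    simp
    ring
  refine ⟨?_, ?_⟩
  · rw [hF]
    exact F.continuous.comp e.symm.continuous
  · rw [hF]
    exact (WithLp.volume_preserving_toLp ℝ ℝ).integrable_comp_of_integrable F.integrable

lemma norm_phase (a b : ℝ) : ‖Complex.exp (-2 * (π : ℂ) * Complex.I * ((a : ℂ) * b))‖ = 1 := by
  rw [Complex.norm_exp]; simp

lemma norm_phase' (x a : ℝ) : ‖Complex.exp (-2 * (π : ℂ) * Complex.I * (x : ℂ) * a)‖ = 1 := by
  rw [mul_assoc]; exact norm_phase x a

lemma norm_phase2 (p ξ : ℝ × ℝ) : ‖Complex.exp (-2 * (π : ℂ) * Complex.I *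
    ((p.1 : ℂ) * (ξ.1 : ℂ) + (p.2 : ℂ) * (ξ.2 : ℂ)))‖ = 1 := by
  rw [mul_add, Complex.exp_add, norm_mul, norm_phase, norm_phase, one_mul]

lemma norm_fourier2_le (φ : SchwartzMap (ℝ × ℝ) ℂ) (ξ : ℝ × ℝ) :
    ‖fourier2 (fun q => φ q) ξ‖ ≤ ∫ p, ‖φ p‖ := by
  refine (norm_integral_le_integral_norm _).trans_eq ?_
  simp only [norm_mul, norm_phase2, one_mul]

/-- The quartic-Gaussian weight `e^{-πr(x⁴+t²)}`. -/
noncomputable def quarticGauss (r : ℝ) (p : ℝ × ℝ) : ℝ :=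
  Real.exp (-(π * r * p.1 ^ 4)) * Real.exp (-(π * r * p.2 ^ 2))

lemma quarticGauss_nonneg (r : ℝ) (p : ℝ × ℝ) : 0 ≤ quarticGauss r p := by
  unfold quarticGauss; positivity

lemma quarticGauss_le_one {r : ℝ} (hr : 0 < r) (p : ℝ × ℝ) : quarticGauss r p ≤ 1 := by
  rw [quarticGauss, ← Real.exp_add, Real.exp_le_one_iff]
  have : 0 ≤ π * r * p.1 ^ 4 := by positivity
  have : 0 ≤ π * r * p.2 ^ 2 := by positivity
  linarith

lemma measurable_quarticGauss : Measurable fun q : (ℝ × ℝ) × ℝ => quarticGauss q.2 q.1 := by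
  unfold quarticGauss; fun_prop

lemma integrable_exp_gauss {r : ℝ} (hr : 0 < r) :
    Integrable fun x : ℝ => Real.exp (-(π * r * x ^ 2)) := by
  simpa using integrable_exp_neg_mul_sq (b := π * r) (by positivity)

lemma integral_exp_gauss {r : ℝ} (hr : 0 < r) :
    ∫ x : ℝ, Real.exp (-(π * r * x ^ 2)) = r ^ (-(1 / 2) : ℝ) := by
  have h := integral_gaussian (π * r)
  simp only [neg_mul] at h
  rw [h, Real.rpow_neg hr.le, ← Real.sqrt_eq_rpow, ← Real.sqrt_inv]
  congr 1
  field_simp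

lemma integrable_quarticGauss {r : ℝ} (hr : 0 < r) : Integrable (quarticGauss r) :=
  (integrable_exp_quartic hr).mul_prod (integrable_exp_gauss hr)

lemma integral_quarticGauss {r : ℝ} (hr : 0 < r) :
    ∫ p, quarticGauss r p = r ^ (-(3 / 4) : ℝ) * ∫ x : ℝ, Real.exp (-(π * x ^ 4)) := by
  have h := integral_prod_mul (μ := (volume : Measure ℝ)) (ν := (volume : Measure ℝ))
    (fun x : ℝ => Real.exp (-(π * r * x ^ 4)))
    (fun x : ℝ => Real.exp (-(π * r * x ^ 2)))
  rw [integral_exp_quartic hr, integral_exp_gauss hr] at h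
  refine Eq.trans h ?_
  rw [show (-(3 / 4) : ℝ) = -(1 / 4) + -(1 / 2) by norm_num, Real.rpow_add hr]
  ring

/-- The one-dimensional Fourier transform of `e^{-πrx⁴}` at `a`. -/
noncomputable def quarticFourier (r a : ℝ) : ℂ :=
  ∫ x : ℝ, Complex.exp (-2 * (π : ℂ) * Complex.I * (x : ℂ) * (a : ℂ)) *
    ((Real.exp (-(π * r * x ^ 4)) : ℝ) : ℂ)

lemma fourier_gauss {r : ℝ} (hr : 0 < r) (b : ℝ) :
    ∫ x : ℝ, Complex.exp (-2 * (π : ℂ) * Complex.I * (x : ℂ) * (b : ℂ)) *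
      ((Real.exp (-(π * r * x ^ 2)) : ℝ) : ℂ) =
      ((r ^ (-(1 / 2) : ℝ) * Real.exp (-(π * b ^ 2 / r)) : ℝ) : ℂ) := by
  have h := fourierIntegral_gaussian (b := ((π * r : ℝ) : ℂ))
    (by rw [Complex.ofReal_re]; positivity) ((-2 * π * b : ℝ) : ℂ)
  have hr' : (r : ℂ) ≠ 0 := by exact_mod_cast hr.ne'
  have hpi : (π : ℂ) ≠ 0 := by exact_mod_cast Real.pi_ne_zero
  calc _ = ∫ x : ℝ, Complex.exp (Complex.I * ((-2 * π * b : ℝ) : ℂ) * x) *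
        Complex.exp (-((π * r : ℝ) : ℂ) * x ^ 2) := by
        refine integral_congr_ae (Eventually.of_forall fun x => ?_)
        push_cast
        congr 2 <;> ring
    _ = _ := by
        rw [h]
        have e1 : (π : ℂ) / ((π * r : ℝ) : ℂ) = ((r⁻¹ : ℝ) : ℂ) := by push_cast; field_simp
        have e2 : -((-2 * π * b : ℝ) : ℂ) ^ 2 / (4 * ((π * r : ℝ) : ℂ)) =
            ((-(π * b ^ 2 / r) : ℝ) : ℂ) := by push_cast; field_simp; ring
        rw [e1, e2, show (1 / 2 : ℂ) = ((1 / 2 : ℝ) : ℂ) by push_cast; ring,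
          ← Complex.ofReal_cpow (by positivity), Real.inv_rpow hr.le, ← Real.rpow_neg hr.le]
        push_cast; rfl

/-- Self-adjointness of the Fourier transform, tested against `e^{-πr(x⁴+t²)}`. -/
lemma integral_fourier2_mul_quarticGauss (φ : SchwartzMap (ℝ × ℝ) ℂ) {r : ℝ} (hr : 0 < r) :
    ∫ p, fourier2 (fun q => φ q) p * (quarticGauss r p : ℂ) =
      ∫ ξ : ℝ × ℝ, φ ξ * (((r ^ (-(1 / 2) : ℝ) * Real.exp (-(π * ξ.2 ^ 2 / r)) : ℝ) : ℂ) *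
        quarticFourier r ξ.1) := by
  have hint : Integrable (Function.uncurry fun p q : ℝ × ℝ => Complex.exp (-2 * (π : ℂ) * Complex.I *
      ((q.1 : ℂ) * (p.1 : ℂ) + (q.2 : ℂ) * (p.2 : ℂ))) * φ q * (quarticGauss r p : ℂ))
      (volume.prod volume) := by
    have h := (integrable_quarticGauss hr).ofReal (𝕜 := ℂ).mul_prod (φ.integrable (μ := volume))
    refine h.norm.mono' ?_ (Eventually.of_forall fun z => ?_)
    · have h1 : Measurable fun z : (ℝ × ℝ) × (ℝ × ℝ) => Complex.exp (-2 * (π : ℂ) * Complex.I *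
        ((z.2.1 : ℂ) * (z.1.1 : ℂ) + (z.2.2 : ℂ) * (z.1.2 : ℂ))) := by fun_prop
      have h2 : Measurable fun z : (ℝ × ℝ) × (ℝ × ℝ) => φ z.2 :=
        φ.continuous.measurable.comp measurable_snd
      have h3 : Measurable fun z : (ℝ × ℝ) × (ℝ × ℝ) => (quarticGauss r z.1 : ℂ) := by
        unfold quarticGauss; fun_prop
      exact ((h1.mul h2).mul h3).aestronglyMeasurable
    · simp only [Function.uncurry, norm_mul]
      rw [norm_phase2, one_mul, mul_comm]
      exact le_rfl
  calc _ = ∫ p : ℝ × ℝ, ∫ q : ℝ × ℝ, Complex.exp (-2 * (π : ℂ) * Complex.I *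
      ((q.1 : ℂ) * (p.1 : ℂ) + (q.2 : ℂ) * (p.2 : ℂ))) * φ q * (quarticGauss r p : ℂ) := by
        refine integral_congr_ae (Eventually.of_forall fun p => ?_)
        simp only [fourier2]
        rw [← integral_mul_const]
    _ = _ := by
        rw [integral_integral_swap hint]
        refine integral_congr_ae (Eventually.of_forall fun ξ => ?_)
        simp only
        rw [← fourier_gauss hr, quarticFourier, mul_comm (∫ x : ℝ, _) (∫ x : ℝ, _),
          ← integral_prod_mul, ← integral_const_mul]
        refine integral_congr_ae (Eventually.of_forall fun p => ?_)
        simp only [quarticGauss]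
        rw [mul_add, Complex.exp_add]
        push_cast
        rw [show -2 * (π : ℂ) * Complex.I * ((ξ.1 : ℂ) * (p.1 : ℂ)) =
          -2 * (π : ℂ) * Complex.I * (p.1 : ℂ) * (ξ.1 : ℂ) by ring,
          show -2 * (π : ℂ) * Complex.I * ((ξ.2 : ℂ) * (p.2 : ℂ)) =
          -2 * (π : ℂ) * Complex.I * (p.2 : ℂ) * (ξ.2 : ℂ) by ring]
        ring

/-! ### Subordination and Fubini -/

/-- Gamma-function subordination of the Korányi kernel to the functions `e^{-πr(x⁴+t²)}`. -/
lemma koranyiKernel_eq_integral {s : ℝ} (hs : 0 < s) {p : ℝ × ℝ} (hp : p.2 ≠ 0) :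
    koranyiKernel s p = π ^ (s / 4) / Real.Gamma (s / 4) *
      ∫ r in Ioi (0 : ℝ), r ^ (s / 4 - 1) * quarticGauss r p := by
  have hA : 0 < p.1 ^ 4 + p.2 ^ 2 := by positivity
  have h := Real.integral_rpow_mul_exp_neg_mul_Ioi (a := s / 4) (r := π * (p.1 ^ 4 + p.2 ^ 2))
    (by positivity) (by positivity)
  have e : ∫ r in Ioi (0 : ℝ), r ^ (s / 4 - 1) * quarticGauss r p =
      ∫ r in Ioi (0 : ℝ), r ^ (s / 4 - 1) * Real.exp (-(π * (p.1 ^ 4 + p.2 ^ 2) * r)) := by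
    refine integral_congr_ae (Eventually.of_forall fun r => ?_)
    simp only [quarticGauss]
    rw [← Real.exp_add]
    congr 2; ring
  rw [e, h, koranyiKernel, one_div, Real.inv_rpow (by positivity),
    Real.mul_rpow Real.pi_pos.le hA.le, Real.rpow_neg hA.le]
  have hG : Real.Gamma (s / 4) ≠ 0 := (Real.Gamma_pos_of_pos (by positivity)).ne'
  have hP : π ^ (s / 4) ≠ 0 := (Real.rpow_pos_of_pos Real.pi_pos _).ne'
  have hQ : (p.1 ^ 4 + p.2 ^ 2) ^ (s / 4) ≠ 0 := (Real.rpow_pos_of_pos hA _).ne'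
  field_simp

lemma ae_snd_ne_zero : ∀ᵐ p : ℝ × ℝ, p.2 ≠ 0 :=
  Measure.quasiMeasurePreserving_snd.ae (p := fun y : ℝ => y ≠ 0) (Measure.ae_ne volume 0)

/-- Absolute convergence on the frequency side. The bound `r^{s/4-1} ‖φ̂‖₁` is used for `r ≤ 1`
and `r^{s/4-7/4} ‖φ‖₁` (times a constant) for `r > 1`; they converge exactly when
`0 < s < 3`. -/
lemma integrable_fourier2_mul_quarticGauss {s : ℝ} (hs : s ∈ Set.Ioo (1 : ℝ) 3)
    (φ : SchwartzMap (ℝ × ℝ) ℂ) :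
    Integrable (Function.uncurry fun (p : ℝ × ℝ) (r : ℝ) => fourier2 (fun q => φ q) p *
      ((r ^ (s / 4 - 1) * quarticGauss r p : ℝ) : ℂ)) (volume.prod (volume.restrict (Ioi 0))) := by
  obtain ⟨hc, hi⟩ := fourier2_continuous_integrable φ
  obtain ⟨h1, h3⟩ := hs
  have hm : Measurable (Function.uncurry fun (p : ℝ × ℝ) (r : ℝ) => fourier2 (fun q => φ q) p *
      ((r ^ (s / 4 - 1) * quarticGauss r p : ℝ) : ℂ)) := by
    have a1 : Measurable fun z : (ℝ × ℝ) × ℝ => fourier2 (fun q => φ q) z.1 :=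
      hc.measurable.comp measurable_fst
    have a2 : Measurable fun z : (ℝ × ℝ) × ℝ => z.2 ^ (s / 4 - 1) :=
      measurable_snd.pow_const _
    exact a1.mul (Complex.measurable_ofReal.comp (a2.mul measurable_quarticGauss))
  have hnorm : ∀ r : ℝ, 0 < r → ∀ p : ℝ × ℝ, ‖fourier2 (fun q => φ q) p *
      ((r ^ (s / 4 - 1) * quarticGauss r p : ℝ) : ℂ)‖ =
      r ^ (s / 4 - 1) * (‖fourier2 (fun q => φ q) p‖ * quarticGauss r p) := by
    intro r hr p
    rw [norm_mul, Complex.norm_real, Real.norm_of_nonneg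
      (mul_nonneg (Real.rpow_nonneg hr.le _) (quarticGauss_nonneg r p))]
    ring
  have hsec : ∀ r : ℝ, 0 < r → Integrable fun p : ℝ × ℝ =>
      ‖fourier2 (fun q => φ q) p‖ * quarticGauss r p := by
    intro r hr
    refine hi.norm.mono' ?_ (Eventually.of_forall fun p => ?_)
    · exact hi.norm.aestronglyMeasurable.mul (integrable_quarticGauss hr).aestronglyMeasurable
    · rw [Real.norm_of_nonneg (mul_nonneg (norm_nonneg _) (quarticGauss_nonneg r p))]
      exact mul_le_of_le_one_right (norm_nonneg _) (quarticGauss_le_one hr p)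
  rw [integrable_prod_iff' hm.aestronglyMeasurable]
  constructor
  · filter_upwards [ae_restrict_mem measurableSet_Ioi] with r hr
    have hr : 0 < r := hr
    refine ((hsec r hr).const_mul (r ^ (s / 4 - 1))).mono'
      (hm.comp (measurable_id.prodMk measurable_const)).aestronglyMeasurable
      (Eventually.of_forall fun p => (hnorm r hr p).le)
  · have hmeas : AEStronglyMeasurable (fun r : ℝ => ∫ p : ℝ × ℝ, ‖fourier2 (fun q => φ q) p *
      ((r ^ (s / 4 - 1) * quarticGauss r p : ℝ) : ℂ)‖) volume :=
      (hm.norm.comp measurable_swap).stronglyMeasurable.integral_prod_right'.aestronglyMeasurable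
    set M := ∫ p, ‖fourier2 (fun q => φ q) p‖ with hM
    set N := ∫ p, ‖φ p‖ with hN
    set C := ∫ x : ℝ, Real.exp (-(π * x ^ 4)) with hC
    have hval : ∀ r : ℝ, 0 < r → ∫ p : ℝ × ℝ, ‖fourier2 (fun q => φ q) p *
      ((r ^ (s / 4 - 1) * quarticGauss r p : ℝ) : ℂ)‖ = r ^ (s / 4 - 1) *
        ∫ p : ℝ × ℝ, ‖fourier2 (fun q => φ q) p‖ * quarticGauss r p := by
      intro r hr
      simp_rw [hnorm r hr]
      exact integral_const_mul _ _
    have hnn : ∀ r : ℝ, 0 ≤ ∫ p : ℝ × ℝ, ‖fourier2 (fun q => φ q) p *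
      ((r ^ (s / 4 - 1) * quarticGauss r p : ℝ) : ℂ)‖ := fun r =>
        integral_nonneg fun p => norm_nonneg _
    change IntegrableOn (fun r : ℝ => ∫ p : ℝ × ℝ, ‖fourier2 (fun q => φ q) p *
      ((r ^ (s / 4 - 1) * quarticGauss r p : ℝ) : ℂ)‖) (Ioi 0) volume
    rw [← Ioc_union_Ioi_eq_Ioi (zero_le_one' ℝ)]
    refine IntegrableOn.union ?_ ?_
    · have hI : IntegrableOn (fun r : ℝ => r ^ (s / 4 - 1)) (Ioc 0 1) :=
        (intervalIntegrable_iff_integrableOn_Ioc_of_le zero_le_one).1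
          (intervalIntegral.intervalIntegrable_rpow' (by linarith))
      refine (hI.mul_const M).mono' hmeas.restrict ?_
      filter_upwards [ae_restrict_mem measurableSet_Ioc] with r hr
      rw [Real.norm_of_nonneg (hnn r), hval r hr.1]
      refine mul_le_mul_of_nonneg_left ?_ (Real.rpow_nonneg hr.1.le _)
      refine integral_mono (hsec r hr.1) hi.norm fun p => ?_
      exact mul_le_of_le_one_right (norm_nonneg _) (quarticGauss_le_one hr.1 p)
    · have hI : IntegrableOn (fun r : ℝ => r ^ (s / 4 - 1 - 3 / 4)) (Ioi 1) :=
        integrableOn_Ioi_rpow_of_lt (by linarith) one_pos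
      refine (hI.mul_const (N * C)).mono' hmeas.restrict ?_
      filter_upwards [ae_restrict_mem measurableSet_Ioi] with r hr
      have hr0 : 0 < r := one_pos.trans hr
      rw [Real.norm_of_nonneg (hnn r), hval r hr0]
      have hle : ∫ p : ℝ × ℝ, ‖fourier2 (fun q => φ q) p‖ * quarticGauss r p ≤
          N * (r ^ (-(3 / 4) : ℝ) * C) := by
        rw [hC, ← integral_quarticGauss hr0, ← integral_const_mul]
        refine integral_mono (hsec r hr0) ((integrable_quarticGauss hr0).const_mul N) fun p => ?_
        exact mul_le_mul_of_nonneg_right (norm_fourier2_le φ p) (quarticGauss_nonneg r p)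
      refine (mul_le_mul_of_nonneg_left hle (Real.rpow_nonneg hr0.le _)).trans (le_of_eq ?_)
      rw [sub_eq_add_neg (s / 4 - 1), Real.rpow_add hr0]
      ring

lemma norm_quarticFourier_le {r : ℝ} (hr : 0 < r) (a : ℝ) :
    ‖quarticFourier r a‖ ≤ r ^ (-(1 / 4) : ℝ) * ∫ x : ℝ, Real.exp (-(π * x ^ 4)) := by
  rw [← integral_exp_quartic hr]
  refine (norm_integral_le_integral_norm _).trans (le_of_eq ?_)
  refine integral_congr_ae (Eventually.of_forall fun x => ?_)
  simp only [norm_mul, norm_phase', one_mul, Complex.norm_real, Real.norm_eq_abs, Real.abs_exp]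

lemma stronglyMeasurable_quarticFourier :
    StronglyMeasurable fun z : ℝ × ℝ => quarticFourier z.1 z.2 := by
  refine StronglyMeasurable.integral_prod_right' (f := fun w : (ℝ × ℝ) × ℝ =>
    Complex.exp (-2 * (π : ℂ) * Complex.I * (w.2 : ℂ) * (w.1.2 : ℂ)) *
    ((Real.exp (-(π * w.1.1 * w.2 ^ 4)) : ℝ) : ℂ)) ?_
  exact Continuous.stronglyMeasurable (by fun_prop)

/-- For `r > 0`, the Fourier transform at `ξ` of `r^{s/4-1} e^{-πr(x⁴+t²)}`. -/
noncomputable def subordinated (s : ℝ) (ξ : ℝ × ℝ) (r : ℝ) : ℂ :=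
  ((r ^ (s / 4 - 1) : ℝ) : ℂ) * (((r ^ (-(1 / 2) : ℝ) * Real.exp (-(π * ξ.2 ^ 2 / r)) : ℝ) : ℂ) *
    quarticFourier r ξ.1)

lemma norm_subordinated_le {s r : ℝ} (hr : 0 < r) (ξ : ℝ × ℝ) :
    ‖subordinated s ξ r‖ ≤ (∫ x : ℝ, Real.exp (-(π * x ^ 4))) *
      (r ^ (s / 4 - 7 / 4) * Real.exp (-(π * ξ.2 ^ 2 / r))) := by
  rw [subordinated, norm_mul, norm_mul, Complex.norm_real, Complex.norm_real,
    Real.norm_of_nonneg (by positivity), Real.norm_of_nonneg (by positivity)]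
  have h := norm_quarticFourier_le hr ξ.1
  calc _ ≤ r ^ (s / 4 - 1) * (r ^ (-(1 / 2) : ℝ) * Real.exp (-(π * ξ.2 ^ 2 / r)) *
        (r ^ (-(1 / 4) : ℝ) * ∫ x : ℝ, Real.exp (-(π * x ^ 4)))) := by gcongr
    _ = _ := by
      rw [show s / 4 - 7 / 4 = (s / 4 - 1) + -(1 / 2) + -(1 / 4) by ring, Real.rpow_add hr,
        Real.rpow_add hr]
      ring

lemma stronglyMeasurable_subordinated (s : ℝ) :
    StronglyMeasurable (Function.uncurry (subordinated s)) := by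
  have h1 : Measurable fun z : (ℝ × ℝ) × ℝ => quarticFourier z.2 z.1.1 :=
    stronglyMeasurable_quarticFourier.measurable.comp
      (measurable_snd.prodMk (measurable_fst.comp measurable_fst))
  have h2 : Measurable fun z : (ℝ × ℝ) × ℝ => z.2 ^ (s / 4 - 1) := measurable_snd.pow_const _
  have h3 : Measurable fun z : (ℝ × ℝ) × ℝ => z.2 ^ (-(1 / 2) : ℝ) *
      Real.exp (-(π * z.1.2 ^ 2 / z.2)) :=
    (measurable_snd.pow_const _).mul (by fun_prop)
  exact ((Complex.measurable_ofReal.comp h2).mul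
    ((Complex.measurable_ofReal.comp h3).mul h1)).stronglyMeasurable

/-- Absolute convergence on the space side: the `r`-integral of the modulus is a constant times
`‖φ ξ‖ |ξ₂|^{(s-3)/2}`, which is integrable because `-1 < (s-3)/2 ≤ 0`. -/
lemma integrable_mul_subordinated {s : ℝ} (hs : s ∈ Set.Ioo (1 : ℝ) 3)
    (φ : SchwartzMap (ℝ × ℝ) ℂ) :
    Integrable (Function.uncurry fun (ξ : ℝ × ℝ) (r : ℝ) => φ ξ * subordinated s ξ r)
      (volume.prod (volume.restrict (Ioi 0))) := by
  obtain ⟨h1, h3⟩ := hs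
  have hm : StronglyMeasurable
      (Function.uncurry fun (ξ : ℝ × ℝ) (r : ℝ) => φ ξ * subordinated s ξ r) :=
    ((φ.continuous.measurable.comp measurable_fst).mul
      (stronglyMeasurable_subordinated s).measurable).stronglyMeasurable
  set C := ∫ x : ℝ, Real.exp (-(π * x ^ 4)) with hC
  set D := ∫ r in Ioi (0 : ℝ), r ^ (s / 4 - 7 / 4) * Real.exp (-(π / r)) with hD
  have hbd : ∀ ξ : ℝ × ℝ, ∀ r : ℝ, 0 < r → ‖φ ξ * subordinated s ξ r‖ ≤
      (‖φ ξ‖ * C) * (r ^ (s / 4 - 7 / 4) * Real.exp (-(π * ξ.2 ^ 2 / r))) := by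
    intro ξ r hr
    rw [norm_mul, mul_assoc]
    exact mul_le_mul_of_nonneg_left (norm_subordinated_le hr ξ) (norm_nonneg _)
  have hsec : ∀ ξ : ℝ × ℝ, ξ.2 ≠ 0 → Integrable (fun r : ℝ => (‖φ ξ‖ * C) *
      (r ^ (s / 4 - 7 / 4) * Real.exp (-(π * ξ.2 ^ 2 / r)))) (volume.restrict (Ioi 0)) :=
    fun ξ hξ => (integrableOn_rpow_mul_exp_inv (by linarith) hξ).const_mul _
  have hint : ∀ ξ : ℝ × ℝ, ξ.2 ≠ 0 →
      Integrable (fun r : ℝ => φ ξ * subordinated s ξ r) (volume.restrict (Ioi 0)) := by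
    intro ξ hξ
    refine (hsec ξ hξ).mono' (hm.comp_measurable measurable_prodMk_left).aestronglyMeasurable ?_
    filter_upwards [ae_restrict_mem measurableSet_Ioi] with r hr using hbd ξ r hr
  rw [integrable_prod_iff hm.aestronglyMeasurable]
  refine ⟨?_, ?_⟩
  · filter_upwards [ae_snd_ne_zero] with ξ hξ using hint ξ hξ
  · have hS := (schwartz_integrable_mul_abs_rpow φ (β := s / 2 - 3 / 2) (by linarith)
      (by linarith)).mul_const (C * D)
    refine hS.mono' hm.norm.integral_prod_right'.aestronglyMeasurable ?_
    filter_upwards [ae_snd_ne_zero] with ξ hξ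
    rw [Real.norm_of_nonneg (integral_nonneg fun r => norm_nonneg _)]
    calc _ ≤ ∫ r in Ioi (0 : ℝ), (‖φ ξ‖ * C) *
          (r ^ (s / 4 - 7 / 4) * Real.exp (-(π * ξ.2 ^ 2 / r))) := by
          refine integral_mono_ae (hint ξ hξ).norm (hsec ξ hξ) ?_
          filter_upwards [ae_restrict_mem measurableSet_Ioi] with r hr using hbd ξ r hr
      _ = _ := by
          rw [integral_const_mul, integral_rpow_mul_exp_inv hξ,
            show 2 * (s / 4 - 7 / 4 + 1) = s / 2 - 3 / 2 by ring]
          ring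

/-- For `ξ₂ ≠ 0`, integrating out the subordination parameter first turns the heat-type integral
into the Bessel integral. -/
lemma integral_subordinated {s : ℝ} (hs : s ∈ Set.Ioo (1 : ℝ) 3) {ξ : ℝ × ℝ} (hξ : ξ.2 ≠ 0) :
    ∫ r in Ioi (0 : ℝ), subordinated s ξ r = ((2 * |ξ.2| ^ ((s - 2) / 4) : ℝ) : ℂ) *
      ∫ x : ℝ, Complex.exp (-2 * (π : ℂ) * Complex.I * (x : ℂ) * (ξ.1 : ℂ)) *
        ((|x| ^ (1 - s / 2) : ℝ) : ℂ) *
        besselK (((s - 2) / 4 : ℝ) : ℂ) ((2 * π * |ξ.2| * x ^ 2 : ℝ) : ℂ) := by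
  have hs' := hs
  obtain ⟨h1, h3⟩ := hs
  have e1 : ∀ r : ℝ, 0 < r → ∀ x : ℝ, (heatKernel s ξ.2 r x : ℂ) =
      ((r ^ (s / 4 - 3 / 2) * Real.exp (-(π * ξ.2 ^ 2 / r)) : ℝ) : ℂ) *
        ((Real.exp (-(π * r * x ^ 4)) : ℝ) : ℂ) := by
    intro r hr x
    rw [heatKernel, ← Complex.ofReal_mul]
  have hm : Measurable (Function.uncurry fun r x : ℝ =>
      Complex.exp (-2 * (π : ℂ) * Complex.I * (x : ℂ) * (ξ.1 : ℂ)) * (heatKernel s ξ.2 r x : ℂ)) := by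
    have a1 : Measurable fun z : ℝ × ℝ =>
      Complex.exp (-2 * (π : ℂ) * Complex.I * (z.2 : ℂ) * (ξ.1 : ℂ)) := by fun_prop
    have a2 : Measurable fun z : ℝ × ℝ => heatKernel s ξ.2 z.1 z.2 :=
      ((measurable_fst.pow_const _).mul (by fun_prop)).mul (by fun_prop)
    exact a1.mul (Complex.measurable_ofReal.comp a2)
  have hnorm : ∀ r : ℝ, 0 < r → ∀ x : ℝ,
      ‖Complex.exp (-2 * (π : ℂ) * Complex.I * (x : ℂ) * (ξ.1 : ℂ)) * (heatKernel s ξ.2 r x : ℂ)‖ =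
      (r ^ (s / 4 - 3 / 2) * Real.exp (-(π * ξ.2 ^ 2 / r))) * Real.exp (-(π * r * x ^ 4)) := by
    intro r hr x
    rw [norm_mul, norm_phase', one_mul, Complex.norm_real, heatKernel,
      Real.norm_of_nonneg (by positivity)]
  have hint : Integrable (Function.uncurry fun r x : ℝ =>
      Complex.exp (-2 * (π : ℂ) * Complex.I * (x : ℂ) * (ξ.1 : ℂ)) * (heatKernel s ξ.2 r x : ℂ))
      ((volume.restrict (Ioi 0)).prod volume) := by
    rw [integrable_prod_iff hm.aestronglyMeasurable]
    constructor
    · filter_upwards [ae_restrict_mem measurableSet_Ioi] with r hr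
      exact ((integrable_exp_quartic hr).const_mul _).mono'
        (hm.comp measurable_prodMk_left).aestronglyMeasurable
        (Eventually.of_forall fun x => (hnorm r hr x).le)
    · have hI := (integrableOn_rpow_mul_exp_inv (q := s / 4 - 7 / 4) (by linarith) hξ).mul_const
        (∫ x : ℝ, Real.exp (-(π * x ^ 4)))
      refine hI.congr ?_
      filter_upwards [ae_restrict_mem measurableSet_Ioi] with r hr
      have hr : 0 < r := hr
      simp only [Function.uncurry, hnorm r hr]
      rw [integral_const_mul, integral_exp_quartic hr,
        show s / 4 - 7 / 4 = (s / 4 - 3 / 2) + -(1 / 4) by ring, Real.rpow_add hr]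
      ring
  calc ∫ r in Ioi (0 : ℝ), subordinated s ξ r
      = ∫ r in Ioi (0 : ℝ), ∫ x : ℝ,
        Complex.exp (-2 * (π : ℂ) * Complex.I * (x : ℂ) * (ξ.1 : ℂ)) *
          (heatKernel s ξ.2 r x : ℂ) := by
        refine setIntegral_congr_fun measurableSet_Ioi fun r hr => ?_
        have hr : 0 < r := hr
        simp only [e1 r hr]
        rw [subordinated, quarticFourier, ← mul_assoc, ← integral_const_mul]
        refine integral_congr_ae (Eventually.of_forall fun x => ?_)
        simp only
        rw [show s / 4 - 3 / 2 = (s / 4 - 1) + -(1 / 2) by ring, Real.rpow_add hr]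
        push_cast
        ring
    _ = ∫ x : ℝ, ∫ r in Ioi (0 : ℝ),
        Complex.exp (-2 * (π : ℂ) * Complex.I * (x : ℂ) * (ξ.1 : ℂ)) *
          (heatKernel s ξ.2 r x : ℂ) := integral_integral_swap hint
    _ = _ := by
        rw [← integral_const_mul]
        refine integral_congr_ae ?_
        filter_upwards [Measure.ae_ne volume (0 : ℝ)] with x hx
        rw [integral_const_mul, integral_heatKernel hs' hξ hx]
        push_cast
        ring

/-- **Lemma 3.2, formula (3.2).** For `s ∈ (1,3)`, the distributional Fourier transform of
`f_s` is represented by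
`ξ ↦ (2π^{s/4} |ξ₂|^{(s-2)/4} / Γ(s/4)) ∫_ℝ e^{-2πixξ₁} |x|^{1-s/2} K_{(s-2)/4}(2π|ξ₂|x²) dx`:
for every Schwartz `φ` on `ℝ²`, `∫ φ̂ f_s` equals the integral of `φ` against this function. -/
theorem koranyiKernel_fourier_formula (s : ℝ) (hs : s ∈ Set.Ioo (1 : ℝ) 3)
    (φ : SchwartzMap (ℝ × ℝ) ℂ) :
    (∫ p : ℝ × ℝ, fourier2 (fun q => φ q) p * (koranyiKernel s p : ℂ)) =
    ∫ ξ : ℝ × ℝ, φ ξ *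
      (((2 * Real.pi ^ (s / 4) * |ξ.2| ^ ((s - 2) / 4) / Real.Gamma (s / 4) : ℝ) : ℂ) *
        ∫ x : ℝ,
          Complex.exp (-2 * (Real.pi : ℂ) * Complex.I * (x : ℂ) * (ξ.1 : ℂ)) *
            ((|x| ^ (1 - s / 2) : ℝ) : ℂ) *
            besselK (((s - 2) / 4 : ℝ) : ℂ) ((2 * Real.pi * |ξ.2| * x ^ 2 : ℝ) : ℂ)) := by
  have h0 : 0 < s := one_pos.trans hs.1
  set c : ℝ := π ^ (s / 4) / Real.Gamma (s / 4) with hc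
  calc ∫ p : ℝ × ℝ, fourier2 (fun q => φ q) p * (koranyiKernel s p : ℂ)
      = ∫ p : ℝ × ℝ, (c : ℂ) * ∫ r in Ioi (0 : ℝ), fourier2 (fun q => φ q) p *
          ((r ^ (s / 4 - 1) * quarticGauss r p : ℝ) : ℂ) := by
        refine integral_congr_ae ?_
        filter_upwards [ae_snd_ne_zero] with p hp
        rw [koranyiKernel_eq_integral h0 hp, integral_const_mul, Complex.ofReal_mul,
          ← integral_complex_ofReal]
        ring
    _ = (c : ℂ) * ∫ r in Ioi (0 : ℝ), ∫ p : ℝ × ℝ, fourier2 (fun q => φ q) p *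
          ((r ^ (s / 4 - 1) * quarticGauss r p : ℝ) : ℂ) := by
        rw [integral_const_mul,
          integral_integral_swap (integrable_fourier2_mul_quarticGauss hs φ)]
    _ = (c : ℂ) * ∫ r in Ioi (0 : ℝ), ∫ ξ : ℝ × ℝ, φ ξ * subordinated s ξ r := by
        congr 1
        refine setIntegral_congr_fun measurableSet_Ioi fun r hr => ?_
        calc _ = ((r ^ (s / 4 - 1) : ℝ) : ℂ) *
              ∫ p : ℝ × ℝ, fourier2 (fun q => φ q) p * (quarticGauss r p : ℂ) := by
              rw [← integral_const_mul]
              refine integral_congr_ae (Eventually.of_forall fun p => ?_)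
              simp only
              push_cast
              ring
          _ = _ := by
              rw [integral_fourier2_mul_quarticGauss φ hr, ← integral_const_mul]
              refine integral_congr_ae (Eventually.of_forall fun ξ => ?_)
              simp only [subordinated]
              ring
    _ = ∫ ξ : ℝ × ℝ, (c : ℂ) * (φ ξ * ∫ r in Ioi (0 : ℝ), subordinated s ξ r) := by
        rw [← integral_integral_swap (integrable_mul_subordinated hs φ), ← integral_const_mul]
        simp_rw [integral_const_mul]
    _ = _ := by
        refine integral_congr_ae ?_
        filter_upwards [ae_snd_ne_zero] with ξ hξ
        rw [integral_subordinated hs hξ, hc]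
        push_cast
        ring
end

section
/- For any s > 0 and any nonzero real numbers x and ξ₂, the improper Riemann integral ∫_{−∞}^∞ e^{−2πitξ₂} (x⁴ + t²)^{−s/4} dt converges (as the limit of ∫_{−N}^N as N → ∞) and equals (2π^{s/4} / Γ(s/4)) |x|^{1−s/2} |ξ₂|^{(s−2)/4} K_{(s−2)/4}(2π x² |ξ₂|). -/
/-!
The power `(x⁴ + t²)^{-a}`, `a = s/4`, is a superposition of Gaussians,
`Γ(a)⁻¹ ∫₀^∞ u^{a-1} e^{-(x⁴ + t²)u} du`, and for finite `N` Fubini moves the truncated Fourier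
integral onto the Gaussian `e^{-ut²}` (`trunc_integral_eq`). One integration by parts bounds
`∫_{-N}^N e^{-2πitξ} e^{-ut²} dt` by a constant depending only on `ξ ≠ 0` (`norm_truncGauss_le`).
Hence dominated convergence applies for every `a > 0`, including the range where the original
integral converges only conditionally (`trunc_integral_tendsto`). The Fourier transform of the
Gaussian turns the limit into a multiple of `H_ν(w) = ∫₀^∞ u^{ν-1} e^{-u-w/u} du` with
`ν = a - 1/2` and `w = π²ξ²x⁴` (`limit_integral_eq`).

It remains to see that `K_ν(z) = ½ (z/2)^{-ν} H_ν(z²/4)` when `K_ν` is defined through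
`I_{±ν}` (`besselK_eq`). Write `I_ν(z) = (z/2)^ν J_ν(z²/4)` with `J_ν` entire. The recurrences of `J`
and `H` determine the Wronskians of `J_ν, J_{-ν}` (`besselJ_wronskian`) and of `J_ν, H_ν`
(`besselJ_besselH_wronskian`): both are constant in `w`, and their
values come from `w → 0`. Eliminating
`H_{ν+1}` between these relations gives `sin(πν)/π · H_ν(w) = J_{-ν}(w) - w^ν J_ν(w)` for all
complex `ν` (`besselH_connection`). Dividing by the sine settles non-integer orders, and
integer orders follow because `H_ν` is continuous in `ν`.
-/

open Filter Set MeasureTheory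
open scoped Real Classical

open scoped Topology

/-! ### The entire part of `I_ν` -/

/-- The entire function `J_ν(w) = Σ wⁿ / (n! Γ(n+ν+1))`, so that `I_ν(z) = (z/2)^ν J_ν(z²/4)`. -/
noncomputable def besselJ (ν w : ℂ) : ℂ :=
  ∑' n : ℕ, w ^ n * (((n.factorial : ℂ))⁻¹ * (Complex.Gamma ((n : ℂ) + ν + 1))⁻¹)

lemma besselJ_coeff_succ (ν : ℂ) (n : ℕ) :
    (((n.factorial : ℂ))⁻¹ * (Complex.Gamma ((n : ℂ) + ν + 1))⁻¹) =
      ((n : ℂ) + 1) * ((n : ℂ) + ν + 1) *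
      ((((n + 1).factorial : ℂ))⁻¹ * (Complex.Gamma (((n + 1 : ℕ) : ℂ) + ν + 1))⁻¹) := by
  rw [Complex.one_div_Gamma_eq_self_mul_one_div_Gamma_add_one, Nat.factorial_succ]
  have h : ((n : ℂ) + 1) ≠ 0 := by exact_mod_cast Nat.succ_ne_zero n
  have h2 : (n.factorial : ℂ) ≠ 0 := by exact_mod_cast Nat.factorial_ne_zero n
  have h3 : (n : ℂ) + ν + 1 + 1 = ((n + 1 : ℕ) : ℂ) + ν + 1 := by push_cast; ring
  rw [h3]
  push_cast
  field_simp

lemma besselJ_summable (ν w : ℂ) :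
    Summable fun n : ℕ => w ^ n * (((n.factorial : ℂ))⁻¹ * (Complex.Gamma ((n : ℂ) + ν + 1))⁻¹) := by
  refine summable_of_ratio_norm_eventually_le (r := 1 / 2) (by norm_num) ?_
  have h1 : ∀ᶠ n : ℕ in atTop, 2 * ‖w‖ + ‖ν‖ ≤ (n : ℝ) :=
    tendsto_natCast_atTop_atTop.eventually_ge_atTop _
  filter_upwards [h1] with n hn
  rw [besselJ_coeff_succ ν n, pow_succ]
  simp only [norm_mul]
  have hA : (1 : ℝ) ≤ ‖(n : ℂ) + 1‖ := by
    have : ((n : ℂ) + 1) = ((n + 1 : ℕ) : ℂ) := by push_cast; ring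
    rw [this, Complex.norm_natCast]; push_cast; linarith [(Nat.cast_nonneg n : (0 : ℝ) ≤ n)]
  have hB : 2 * ‖w‖ ≤ ‖(n : ℂ) + ν + 1‖ := by
    have h3 : ((n + 1 : ℕ) : ℂ) = ((n : ℂ) + ν + 1) - ν := by push_cast; ring
    have h4 : ‖((n + 1 : ℕ) : ℂ)‖ ≤ ‖(n : ℂ) + ν + 1‖ + ‖ν‖ := by rw [h3]; exact norm_sub_le _ _
    rw [Complex.norm_natCast] at h4
    push_cast at h4; linarith
  have hC : 2 * ‖w‖ ≤ ‖(n : ℂ) + 1‖ * ‖(n : ℂ) + ν + 1‖ := by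
    nlinarith [norm_nonneg w]
  set C := ‖(((n + 1).factorial : ℂ))⁻¹‖ * ‖(Complex.Gamma (((n + 1 : ℕ) : ℂ) + ν + 1))⁻¹‖
  have hCn : 0 ≤ ‖w ^ n‖ * C := by positivity
  nlinarith [mul_le_mul_of_nonneg_right hC hCn]

lemma besselJ_hasDerivAt (ν w : ℂ) : HasDerivAt (besselJ ν) (besselJ (ν + 1) w) w := by
  have key : ∀ (n : ℕ), (((n + 1 : ℕ) : ℂ)) * ((((n + 1).factorial : ℂ))⁻¹ *
        (Complex.Gamma (((n + 1 : ℕ) : ℂ) + ν + 1))⁻¹) =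
      (((n.factorial : ℂ))⁻¹ * (Complex.Gamma ((n : ℂ) + (ν + 1) + 1))⁻¹) := by
    intro n
    have h : ((n : ℂ) + 1) ≠ 0 := by exact_mod_cast Nat.succ_ne_zero n
    have h2 : (n.factorial : ℂ) ≠ 0 := by exact_mod_cast Nat.factorial_ne_zero n
    have h3 : (n : ℂ) + (ν + 1) + 1 = ((n + 1 : ℕ) : ℂ) + ν + 1 := by push_cast; ring
    rw [h3, Nat.factorial_succ]; push_cast; field_simp
  set c : ℕ → ℂ := fun n => (((n.factorial : ℂ))⁻¹ * (Complex.Gamma ((n : ℂ) + ν + 1))⁻¹) with hc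
  have hsum : ∀ v : ℂ, Summable fun n : ℕ => ((n : ℂ) * v ^ (n - 1)) * c n := by
    intro v
    rw [← summable_nat_add_iff 1]
    refine (besselJ_summable (ν + 1) v).congr fun n => ?_
    rw [← key n]; simp only [hc, Nat.add_sub_cancel]; ring
  have h := hasDerivAt_tsum_of_isPreconnected (𝕜 := ℂ) (F := ℂ)
    (u := fun n : ℕ => ‖((n : ℂ) * (((‖w‖ + 1 : ℝ) : ℂ)) ^ (n - 1)) * c n‖)
    (t := Metric.ball 0 (‖w‖ + 1)) (g := fun n v => v ^ n * c n)
    (g' := fun n v => ((n : ℂ) * v ^ (n - 1)) * c n) (y₀ := 0) (y := w)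
    (hsum _).norm Metric.isOpen_ball (convex_ball _ _).isPreconnected
    (fun n y _ => (hasDerivAt_pow n y).mul_const _) ?_ ?_ (besselJ_summable ν 0) ?_
  · refine h.congr_deriv ?_
    rw [(hsum w).tsum_eq_zero_add]
    simp only [Nat.cast_zero, zero_mul, zero_add]
    unfold besselJ
    refine tsum_congr fun n => ?_
    rw [← key n]; simp only [hc, Nat.add_sub_cancel]; ring
  · intro n y hy
    simp only [norm_mul, norm_pow]
    have : ‖y‖ ≤ ‖((‖w‖ + 1 : ℝ) : ℂ)‖ := by
      rw [Complex.norm_of_nonneg (by positivity)]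
      simpa using (mem_ball_zero_iff.1 hy).le
    gcongr
  · exact Metric.mem_ball_self (by positivity)
  · simp

/-- The three-term recurrence, valid for every `ν` because `1/Γ` vanishes at the poles of `Γ`. -/
lemma besselJ_rec (ν w : ℂ) :
    besselJ ν w = (ν + 1) * besselJ (ν + 1) w + w * besselJ (ν + 2) w := by
  have h1 := besselJ_summable (ν + 1) w
  have h2 := besselJ_summable (ν + 2) w
  set f : ℕ → ℂ := fun n => (n : ℂ) * (w ^ n * (((n.factorial : ℂ))⁻¹ *
    (Complex.Gamma ((n : ℂ) + (ν + 1) + 1))⁻¹)) with hf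
  have hfs : ∀ n : ℕ, f (n + 1) = w * (w ^ n * (((n.factorial : ℂ))⁻¹ *
      (Complex.Gamma ((n : ℂ) + (ν + 2) + 1))⁻¹)) := by
    intro n
    have h : ((n : ℂ) + 1) ≠ 0 := by exact_mod_cast Nat.succ_ne_zero n
    have h2 : (n.factorial : ℂ) ≠ 0 := by exact_mod_cast Nat.factorial_ne_zero n
    have h3 : (n : ℂ) + (ν + 2) + 1 = ((n + 1 : ℕ) : ℂ) + (ν + 1) + 1 := by push_cast; ring
    simp only [hf]
    rw [h3, Nat.factorial_succ, pow_succ]; push_cast; field_simp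
  have hfsum : Summable f := by
    rw [← summable_nat_add_iff 1]
    exact (h2.mul_left w).congr fun n => (hfs n).symm
  have h3 : w * besselJ (ν + 2) w = ∑' n, f n := by
    rw [hfsum.tsum_eq_zero_add]
    simp only [hfs]
    rw [tsum_mul_left]
    simp [hf, besselJ]
  rw [h3]
  unfold besselJ
  rw [← tsum_mul_left, ← (h1.mul_left _).tsum_add hfsum]
  refine tsum_congr fun n => ?_
  rw [Complex.one_div_Gamma_eq_self_mul_one_div_Gamma_add_one]
  have h3 : (n : ℂ) + (ν + 1) + 1 = (n : ℂ) + ν + 1 + 1 := by ring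
  simp only [hf, h3]
  ring

lemma besselJ_zero (ν : ℂ) : besselJ ν 0 = (Complex.Gamma (ν + 1))⁻¹ := by
  unfold besselJ
  rw [tsum_eq_single 0]
  · simp
  · intro n hn; simp [hn]

/-- The Wronskian of `I_ν` and `I_{-ν}`. -/
lemma besselJ_wronskian (ν w : ℂ) :
    w * besselJ (ν + 1) w * besselJ (-ν) w - besselJ ν w * besselJ (-ν - 1) w =
      Complex.sin (π * ν) / π := by
  set B : ℂ → ℂ := fun w =>
    w * besselJ (ν + 1) w * besselJ (-ν) w - besselJ ν w * besselJ (-ν - 1) w with hB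
  have hd : ∀ w, HasDerivAt B 0 w := by
    intro w
    have h := (((hasDerivAt_id w).mul (besselJ_hasDerivAt (ν + 1) w)).mul
      (besselJ_hasDerivAt (-ν) w)).sub
      ((besselJ_hasDerivAt ν w).mul (besselJ_hasDerivAt (-ν - 1) w))
    refine h.congr_deriv ?_
    have e1 := besselJ_rec ν w
    have e2 := besselJ_rec (-ν - 1) w
    have t1 : ν + 1 + 1 = ν + 2 := by ring
    have t2 : -ν - 1 + 1 = -ν := by ring
    have t3 : -ν - 1 + 2 = -ν + 1 := by ring
    rw [t2, t3] at e2
    rw [t1, t2]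
    simp only [Pi.mul_apply, id]
    linear_combination -(besselJ (-ν) w) * e1 - besselJ (ν + 1) w * e2
  have hconst : B w = B 0 := is_const_of_deriv_eq_zero
    (fun w => (hd w).differentiableAt) (fun w => (hd w).deriv) w 0
  change B w = _
  rw [hconst]
  simp only [hB, besselJ_zero]
  have hr := Complex.Gamma_mul_Gamma_one_sub (-ν)
  have t : -ν - 1 + 1 = -ν := by ring
  have t2 : 1 - -ν = ν + 1 := by ring
  rw [t2, mul_neg, Complex.sin_neg] at hr
  rw [t, ← mul_inv, mul_comm (Complex.Gamma (ν + 1)), hr]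
  rw [inv_div]; ring

/-! ### The Mellin integral representing `K_ν` -/

/-- The kernel `e^{-u-w/u}` of the integral representation of `K_ν`. -/
noncomputable def kerH (w u : ℝ) : ℂ := ((Real.exp (-u - w / u) : ℝ) : ℂ)

/-- `H_ν(w) = ∫₀^∞ u^{ν-1} e^{-u-w/u} du`, so that `K_ν(z) = ½ (z/2)^{-ν} H_ν(z²/4)`. -/
noncomputable def besselH (ν : ℂ) (w : ℝ) : ℂ := mellin (kerH w) ν

lemma kerH_continuousOn (w : ℝ) : ContinuousOn (kerH w) (Ioi 0) := by
  unfold kerH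
  refine Complex.continuous_ofReal.comp_continuousOn (Real.continuous_exp.comp_continuousOn ?_)
  exact (continuousOn_id.neg).sub
    (continuousOn_const.div continuousOn_id fun x hx => (mem_Ioi.1 hx).ne')

lemma kerH_locInt (w : ℝ) : LocallyIntegrableOn (kerH w) (Ioi 0) :=
  (kerH_continuousOn w).locallyIntegrableOn measurableSet_Ioi

lemma norm_kerH (w u : ℝ) : ‖kerH w u‖ = Real.exp (-u - w / u) := by
  unfold kerH
  rw [Complex.norm_of_nonneg (Real.exp_pos _).le]

lemma kerH_isBigO_top {w : ℝ} (hw : 0 ≤ w) (b : ℝ) :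
    kerH w =O[atTop] (fun x : ℝ => x ^ b) := by
  refine Asymptotics.IsBigO.trans ?_ (isLittleO_exp_neg_mul_rpow_atTop one_pos b).isBigO
  refine Asymptotics.IsBigO.of_bound 1 ?_
  filter_upwards [eventually_gt_atTop 0] with u hu
  rw [norm_kerH, Real.norm_of_nonneg (Real.exp_pos _).le, one_mul]
  have : 0 ≤ w / u := by positivity
  exact Real.exp_le_exp.2 (by linarith)

lemma kerH_isBigO_zero {w : ℝ} (hw : 0 < w) (b : ℝ) :
    kerH w =O[𝓝[>] 0] (fun x : ℝ => x ^ b) := by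
  have h := (isLittleO_exp_neg_mul_rpow_atTop hw (-b)).isBigO.comp_tendsto
    (tendsto_inv_nhdsGT_zero (𝕜 := ℝ))
  refine Asymptotics.IsBigO.trans (Asymptotics.IsBigO.of_bound 1 ?_) (h.congr' (.rfl) ?_)
  · filter_upwards [self_mem_nhdsWithin] with u hu
    have hu : 0 < u := hu
    simp only [Function.comp]
    rw [norm_kerH, Real.norm_of_nonneg (Real.exp_pos _).le, one_mul]
    exact Real.exp_le_exp.2 (by rw [div_eq_mul_inv]; linarith)
  · filter_upwards [self_mem_nhdsWithin] with u hu
    have hu : 0 < u := hu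
    simp only [Function.comp]
    rw [Real.inv_rpow hu.le, Real.rpow_neg hu.le, inv_inv]

lemma kerH_mellinConvergent {w : ℝ} (hw : 0 < w) (ν : ℂ) : MellinConvergent (kerH w) ν :=
  mellinConvergent_of_isBigO_rpow (a := ν.re + 1) (b := ν.re - 1) (kerH_locInt w)
    (kerH_isBigO_top hw.le _) (by linarith) (kerH_isBigO_zero hw _) (by linarith)

lemma besselH_continuous {w : ℝ} (hw : 0 < w) : Continuous fun ν => besselH ν w := by
  have : Differentiable ℂ (mellin (kerH w)) := fun ν =>
    mellin_differentiableAt_of_isBigO_rpow (a := ν.re + 1) (b := ν.re - 1) (kerH_locInt w)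
      (kerH_isBigO_top hw.le _) (by linarith) (kerH_isBigO_zero hw _) (by linarith)
  exact this.continuous

/-- The symmetry `K_{-ν} = K_ν`, from the substitution `u ↦ w/u`. -/
lemma besselH_neg {w : ℝ} (hw : 0 < w) (ν : ℂ) :
    besselH ν w = (w : ℂ) ^ ν * besselH (-ν) w := by
  unfold besselH
  have h1 : mellin (kerH w) ν = mellin (fun t => (fun t => kerH w (w * t)) t⁻¹) ν := by
    unfold mellin
    refine setIntegral_congr_fun measurableSet_Ioi fun u hu => ?_
    have hu : 0 < u := hu
    simp only [kerH]
    have e : -u - w / u = -(w * u⁻¹) - w / (w * u⁻¹) := by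
      field_simp
      ring
    rw [e]
  rw [h1, mellin_comp_inv (fun t => kerH w (w * t)), mellin_comp_mul_left _ _ hw, neg_neg, smul_eq_mul]

lemma hasDerivAt_kerH (w : ℝ) {u : ℝ} (hu : 0 < u) :
    HasDerivAt (kerH w) (kerH w u * (-1 + (w : ℂ) / (u : ℂ) ^ 2)) u := by
  have h : HasDerivAt (fun u : ℝ => Real.exp (-u - w / u))
      (Real.exp (-u - w / u) * (-1 - (w * (-(u ^ 2)⁻¹)))) u := by
    refine HasDerivAt.exp ?_
    have := ((hasDerivAt_id u).neg).sub ((hasDerivAt_inv hu.ne').const_mul w)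
    simpa [div_eq_mul_inv] using! this
  refine h.ofReal_comp.congr_deriv ?_
  simp only [kerH]
  push_cast
  ring

lemma tendsto_cpow_mul_kerH (ν : ℂ) (w : ℝ) (l : Filter ℝ) (hl : ∀ᶠ u in l, 0 < u) (b : ℝ)
    (h : kerH w =O[l] (fun x : ℝ => x ^ b)) (hb : Tendsto (fun x : ℝ => x ^ (ν.re + b)) l (𝓝 0)) :
    Tendsto (fun u : ℝ => (u : ℂ) ^ ν * kerH w u) l (𝓝 0) := by
  refine Asymptotics.IsBigO.trans_tendsto ?_ hb
  have h2 : (fun u : ℝ => (u : ℂ) ^ ν) =O[l] (fun u : ℝ => u ^ ν.re) := by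
    refine Asymptotics.IsBigO.of_bound 1 ?_
    filter_upwards [hl] with u hu
    rw [Complex.norm_cpow_eq_rpow_re_of_pos hu, one_mul]
    exact le_abs_self _
  refine (h2.mul h).congr' .rfl ?_
  filter_upwards [hl] with u hu
  rw [Real.rpow_add hu]

/-- Integration by parts gives `H_{ν+1} = ν H_ν + w H_{ν-1}`. -/
lemma besselH_rec {w : ℝ} (hw : 0 < w) (ν : ℂ) :
    besselH (ν + 1) w = ν * besselH ν w + w * besselH (ν - 1) w := by
  have c1 := kerH_mellinConvergent hw (ν + 1)
  have c2 := kerH_mellinConvergent hw ν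
  have c3 := kerH_mellinConvergent hw (ν - 1)
  unfold MellinConvergent at c1 c2 c3
  simp only [smul_eq_mul] at c1 c2 c3
  have hE : ∀ u ∈ Ioi (0 : ℝ), (u : ℂ) ^ ν * (kerH w u * (-1 + (w : ℂ) / (u : ℂ) ^ 2)) =
      -((u : ℂ) ^ (ν + 1 - 1) * kerH w u) + w * ((u : ℂ) ^ (ν - 1 - 1) * kerH w u) := by
    intro u hu
    have hu0 : (u : ℂ) ≠ 0 := by exact_mod_cast (mem_Ioi.1 hu).ne'
    have : ν - 1 - 1 = ν - 2 := by ring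
    rw [add_sub_cancel_right, this, Complex.cpow_sub _ _ hu0]
    have : (u : ℂ) ^ (2 : ℂ) = (u : ℂ) ^ 2 := by exact_mod_cast Complex.cpow_natCast (u : ℂ) 2
    rw [this]
    ring
  have hF : ∀ u ∈ Ioi (0 : ℝ), ν * (u : ℂ) ^ (ν - 1) * kerH w u =
      ν * ((u : ℂ) ^ (ν - 1) * kerH w u) := fun u _ => by ring
  have hi1 := (c1.neg.add (c3.const_mul (w : ℂ)))
  have h := integral_Ioi_mul_deriv_eq_deriv_mul (a := (0 : ℝ)) (a' := (0 : ℂ)) (b' := (0 : ℂ))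
    (u := fun u : ℝ => (u : ℂ) ^ ν) (v := kerH w) (u' := fun u : ℝ => ν * (u : ℂ) ^ (ν - 1))
    (v' := fun u => kerH w u * (-1 + (w : ℂ) / (u : ℂ) ^ 2)) ?_ (fun u hu => hasDerivAt_kerH w hu)
    ?_ ?_ ?_ ?_
  · rw [setIntegral_congr_fun measurableSet_Ioi hE, setIntegral_congr_fun measurableSet_Ioi hF,
      integral_add c1.fun_neg (c3.const_mul (w : ℂ)), integral_neg, integral_const_mul,
      integral_const_mul] at h
    unfold besselH mellin
    simp only [smul_eq_mul]
    linear_combination -h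
  · intro u hu
    have hu0 : (u : ℂ) ∈ Complex.slitPlane := Complex.ofReal_mem_slitPlane.2 hu
    simpa using ((hasDerivAt_id (u : ℂ)).cpow_const (c := ν) hu0).comp_ofReal
  · exact (integrableOn_congr_fun hE measurableSet_Ioi).2 hi1
  · exact (integrableOn_congr_fun hF measurableSet_Ioi).2 (c2.const_mul ν)
  · refine tendsto_cpow_mul_kerH ν w _ self_mem_nhdsWithin (-ν.re + 1) (kerH_isBigO_zero hw _) ?_
    simp only [add_neg_cancel_left, Real.rpow_one]
    exact tendsto_id.mono_left nhdsWithin_le_nhds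
  · refine tendsto_cpow_mul_kerH ν w _ (eventually_gt_atTop 0) (-ν.re - 1)
      (kerH_isBigO_top hw.le _) ?_
    have : ν.re + (-ν.re - 1) = -1 := by ring
    rw [this]
    exact tendsto_rpow_neg_atTop one_pos

lemma cpow_smul_kerH_aestronglyMeasurable (v : ℝ) (μ : ℂ) :
    AEStronglyMeasurable (fun u : ℝ => (u : ℂ) ^ μ • kerH v u) (volume.restrict (Ioi 0)) := by
  have h : ContinuousOn (fun u : ℝ => (u : ℂ) ^ μ) (Ioi 0) := fun u hu =>
    (Complex.continuousAt_ofReal_cpow_const u μ (Or.inr (mem_Ioi.1 hu).ne')).continuousWithinAt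
  exact (h.smul (kerH_continuousOn v)).aestronglyMeasurable measurableSet_Ioi

lemma besselH_hasDerivAt {w : ℝ} (hw : 0 < w) (ν : ℂ) :
    HasDerivAt (besselH ν) (-besselH (ν - 1) w) w := by
  have hb : IntegrableOn (fun u : ℝ => ‖(u : ℂ) ^ (ν - 1 - 1) • kerH (w / 2) u‖) (Ioi 0) :=
    (kerH_mellinConvergent (half_pos hw) (ν - 1)).norm
  have h := (hasDerivAt_integral_of_dominated_loc_of_deriv_le (𝕜 := ℝ)
    (μ := volume.restrict (Ioi (0 : ℝ))) (x₀ := w) (s := Ioi (w / 2))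
    (F := fun v u => (u : ℂ) ^ (ν - 1) • kerH v u)
    (F' := fun v u => -((u : ℂ) ^ (ν - 1 - 1) • kerH v u))
    (bound := fun u : ℝ => ‖(u : ℂ) ^ (ν - 1 - 1) • kerH (w / 2) u‖)
    (Ioi_mem_nhds (half_lt_self hw)) (Eventually.of_forall fun v => cpow_smul_kerH_aestronglyMeasurable v _)
    (kerH_mellinConvergent hw ν) (cpow_smul_kerH_aestronglyMeasurable w _).neg ?_ hb ?_).2
  · rw [integral_neg] at h
    exact h
  · refine (ae_restrict_iff' measurableSet_Ioi).2 (Eventually.of_forall fun u hu v hv => ?_)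
    have hu : 0 < u := hu
    have hv : w / 2 < v := hv
    rw [norm_neg, norm_smul, norm_smul, norm_kerH, norm_kerH]
    gcongr
  · refine (ae_restrict_iff' measurableSet_Ioi).2 (Eventually.of_forall fun u hu v _ => ?_)
    have hu : 0 < u := hu
    have hu0 : (u : ℂ) ≠ 0 := by exact_mod_cast hu.ne'
    have h : HasDerivAt (fun v : ℝ => Real.exp (-u - v / u))
        (Real.exp (-u - v / u) * (-(1 / u))) v :=
      (((hasDerivAt_id v).div_const u).const_sub (-u)).exp
    refine (h.ofReal_comp.const_mul ((u : ℂ) ^ (ν - 1))).congr_deriv ?_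
    rw [Complex.cpow_sub (ν - 1) 1 hu0, Complex.cpow_one]
    simp only [kerH, smul_eq_mul]
    push_cast
    ring

lemma besselH_tendsto {ν : ℂ} (hν : 0 < ν.re) :
    Tendsto (besselH ν) (𝓝[>] 0) (𝓝 (Complex.Gamma ν)) := by
  rw [Complex.Gamma_eq_integral hν]
  have hint := Complex.GammaIntegral_convergent hν
  have e : Complex.GammaIntegral ν =
      ∫ u in Ioi (0 : ℝ), (u : ℂ) ^ (ν - 1) • kerH 0 u := by
    unfold Complex.GammaIntegral
    refine setIntegral_congr_fun measurableSet_Ioi fun u _ => ?_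
    simp [kerH, mul_comm]
  rw [e]
  refine tendsto_integral_filter_of_dominated_convergence
    (fun u : ℝ => ‖((Real.exp (-u) : ℝ) : ℂ) * (u : ℂ) ^ (ν - 1)‖)
    (Eventually.of_forall fun v => cpow_smul_kerH_aestronglyMeasurable v _) ?_ hint.norm ?_
  · filter_upwards [self_mem_nhdsWithin] with v hv
    refine (ae_restrict_iff' measurableSet_Ioi).2 (Eventually.of_forall fun u hu => ?_)
    have hu : 0 < u := hu
    have hv : 0 < v := hv
    rw [norm_smul, norm_kerH, norm_mul, mul_comm, Complex.norm_of_nonneg (Real.exp_pos _).le]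
    have : 0 ≤ v / u := by positivity
    gcongr
    linarith
  · refine Eventually.of_forall fun u => ?_
    refine Tendsto.mono_left ?_ nhdsWithin_le_nhds
    have : Continuous fun v : ℝ => (u : ℂ) ^ (ν - 1) • kerH v u := by
      unfold kerH; fun_prop
    exact this.tendsto 0

/-- The Wronskian of `I_ν` and `K_ν`. It is constant in `w`; for `Re ν > -1` its value is
the limit at `0`, and the recurrences show that it does not change when `ν` is lowered by `1`. -/
lemma besselJ_besselH_wronskian {w : ℝ} (hw : 0 < w) (ν : ℂ) :
    besselJ ν w * besselH (ν + 1) w + w * besselJ (ν + 1) w * besselH ν w = 1 := by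
  have main : ∀ ν : ℂ, -1 < ν.re →
      besselJ ν w * besselH (ν + 1) w + w * besselJ (ν + 1) w * besselH ν w = 1 := by
    intro ν hν
    set A : ℝ → ℂ := fun w =>
      besselJ ν w * besselH (ν + 1) w + w * besselJ (ν + 1) w * besselH ν w with hA
    have hd : ∀ v ∈ Ioi (0 : ℝ), HasDerivAt A 0 v := by
      intro v hv
      have hv : 0 < v := hv
      have d0 : HasDerivAt (fun v : ℝ => (v : ℂ)) 1 v := by
        simpa using (hasDerivAt_id v).ofReal_comp
      have h := (((besselJ_hasDerivAt ν v).comp_ofReal).mul (besselH_hasDerivAt hv (ν + 1))).add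
        ((d0.mul ((besselJ_hasDerivAt (ν + 1) v).comp_ofReal)).mul (besselH_hasDerivAt hv ν))
      refine h.congr_deriv ?_
      have e1 := besselJ_rec ν v
      have e2 := besselH_rec hv ν
      have t1 : ν + 1 + 1 = ν + 2 := by ring
      have t2 : ν + 1 - 1 = ν := by ring
      rw [t1, t2]
      simp only [Pi.mul_apply]
      linear_combination -besselH ν v * e1 + besselJ (ν + 1) v * e2
    have hlim : Tendsto A (𝓝[>] 0) (𝓝 1) := by
      have hJ : ∀ μ : ℂ, Tendsto (fun v : ℝ => besselJ μ v) (𝓝[>] 0)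
          (𝓝 ((Complex.Gamma (μ + 1))⁻¹)) := by
        intro μ
        have : ContinuousAt (fun v : ℝ => besselJ μ v) 0 :=
          ((besselJ_hasDerivAt μ ((0 : ℝ) : ℂ)).comp_ofReal).continuousAt
        have h := this.tendsto
        rw [Complex.ofReal_zero, besselJ_zero] at h
        exact h.mono_left nhdsWithin_le_nhds
      have h1 : 0 < (ν + 1).re := by simp; linarith
      have h2 : 0 < (ν + 2).re := by simp; linarith
      have hg : ν + 1 ≠ 0 := fun h => by simp [h] at h1
      have hwH : Tendsto (fun v : ℝ => (v : ℂ) * besselH ν v) (𝓝[>] 0) (𝓝 0) := by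
        have h := (besselH_tendsto h2).sub ((besselH_tendsto h1).const_mul (ν + 1))
        have t1 : ν + 2 = ν + 1 + 1 := by ring
        rw [t1, Complex.Gamma_add_one _ hg, sub_self] at h
        refine h.congr' ?_
        filter_upwards [self_mem_nhdsWithin] with v hv
        have e := besselH_rec (mem_Ioi.1 hv) (ν + 1)
        rw [add_sub_cancel_right] at e
        rw [e]; ring
      have h := ((hJ ν).mul (besselH_tendsto h1)).add ((hJ (ν + 1)).mul hwH)
      rw [inv_mul_cancel₀ (Complex.Gamma_ne_zero_of_re_pos h1), mul_zero, add_zero] at h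
      refine h.congr fun v => ?_
      simp only [hA]; ring
    have hconst : ∀ v ∈ Ioi (0 : ℝ), A v = A w := fun v hv =>
      isOpen_Ioi.is_const_of_deriv_eq_zero isPreconnected_Ioi
        (fun v hv => (hd v hv).differentiableAt.differentiableWithinAt)
        (fun v hv => (hd v hv).deriv) hv hw
    have h2 : Tendsto A (𝓝[>] 0) (𝓝 (A w)) := by
      refine tendsto_const_nhds.congr' ?_
      filter_upwards [self_mem_nhdsWithin] with v hv
      exact (hconst v hv).symm
    exact tendsto_nhds_unique h2 hlim
  have step : ∀ n : ℕ, ∀ ν : ℂ, -1 < ν.re + n →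
      besselJ ν w * besselH (ν + 1) w + w * besselJ (ν + 1) w * besselH ν w = 1 := by
    intro n
    induction n with
    | zero => intro ν hν; exact main ν (by simpa using hν)
    | succ n ih =>
      intro ν hν
      have h := ih (ν + 1) (by push_cast at hν; simp; linarith)
      have e1 := besselJ_rec ν w
      have e2 := besselH_rec hw (ν + 1)
      have t1 : ν + 1 + 1 = ν + 2 := by ring
      rw [add_sub_cancel_right] at e2
      rw [t1] at h e2
      linear_combination h + besselH (ν + 1) w * e1 - besselJ (ν + 1) w * e2
  obtain ⟨n, hn⟩ := exists_nat_gt (-1 - ν.re)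
  exact step n ν (by linarith)

/-- The connection formula `(2/π) sin(νπ) K_ν = I_{-ν} - I_ν` in terms of `H` and `J`: eliminate
`H_{ν+1}` between the Wronskian relations for `ν` and `-ν`. -/
lemma besselH_connection {w : ℝ} (hw : 0 < w) (ν : ℂ) :
    Complex.sin (π * ν) / π * besselH ν w =
      besselJ (-ν) w - (w : ℂ) ^ ν * besselJ ν w := by
  have hw0 : (w : ℂ) ≠ 0 := by exact_mod_cast hw.ne'
  have hp : (w : ℂ) ^ ν ≠ 0 := by simp [Complex.cpow_eq_zero_iff, hw0]
  have A1 := besselJ_besselH_wronskian hw ν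
  have A2 := besselJ_besselH_wronskian hw (-ν)
  have B := besselJ_wronskian ν w
  have s1 := besselH_neg hw ν
  have s2 := besselH_neg hw (ν - 1)
  have e2 := besselH_rec hw ν
  have e3 := besselJ_rec (-ν - 1) w
  have t1 : -(ν - 1) = -ν + 1 := by ring
  have t2 : -ν - 1 + 1 = -ν := by ring
  have t3 : -ν - 1 + 2 = -ν + 1 := by ring
  rw [t1, Complex.cpow_sub _ _ hw0, Complex.cpow_one] at s2
  rw [t2, t3] at e3
  have s2' : w * besselH (ν - 1) w = (w : ℂ) ^ ν * besselH (-ν + 1) w := by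
    rw [s2]; field_simp
  have key : besselJ (-ν) w * besselH (ν + 1) w + besselJ (-ν - 1) w * besselH ν w
      = (w : ℂ) ^ ν := by
    rw [e2, s2', e3]
    linear_combination (w : ℂ) ^ ν * A2 + (w * besselJ (-ν + 1) w) * s1
  rw [← B]
  linear_combination besselJ (-ν) w * A1 - besselJ ν w * key

/-! ### The integral representation of `K_ν` -/

lemma besselI_eq (ν : ℂ) {z : ℝ} (hz : 0 < z) :
    besselI ν z = ((z : ℂ) / 2) ^ ν * besselJ ν (((z / 2) ^ 2 : ℝ) : ℂ) := by
  unfold besselI besselJ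
  rw [← tsum_mul_left]
  refine tsum_congr fun n => ?_
  have h0 : (z : ℂ) / 2 ≠ 0 := by
    have : (z : ℂ) ≠ 0 := by exact_mod_cast hz.ne'
    simpa using this
  have h2 : (2 : ℂ) * (n : ℂ) = ((2 * n : ℕ) : ℂ) := by push_cast; ring
  rw [Complex.cpow_add _ _ h0, h2, Complex.cpow_natCast, pow_mul, div_eq_mul_inv, mul_inv]
  push_cast
  ring

lemma bessel_quotient_eq {z : ℝ} (hz : 0 < z) {μ : ℂ} (hμ : ¬ ∃ n : ℤ, μ = (n : ℂ)) :
    ((Real.pi : ℂ) / (2 * Complex.sin (μ * (Real.pi : ℂ)))) * (besselI (-μ) z - besselI μ z) =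
      1 / 2 * ((z : ℂ) / 2) ^ (-μ) * besselH μ ((z / 2) ^ 2) := by
  have hw : 0 < (z / 2) ^ 2 := by positivity
  have hpi : (π : ℂ) ≠ 0 := by exact_mod_cast Real.pi_ne_zero
  have h0 : (z : ℂ) / 2 ≠ 0 := by
    have : (z : ℂ) ≠ 0 := by exact_mod_cast hz.ne'
    simpa using this
  have hsin : Complex.sin (π * μ) ≠ 0 := by
    rw [Ne, Complex.sin_eq_zero_iff]
    rintro ⟨k, hk⟩
    refine hμ ⟨k, ?_⟩
    rw [mul_comm] at hk
    exact mul_right_cancel₀ hpi hk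
  have hc := besselH_connection hw μ
  have hcp : ((((z / 2) ^ 2 : ℝ)) : ℂ) ^ μ = ((z : ℂ) / 2) ^ μ * ((z : ℂ) / 2) ^ μ := by
    have h := Complex.mul_cpow_ofReal_nonneg (a := z / 2) (b := z / 2) (by positivity)
      (by positivity) μ
    push_cast at h ⊢
    rw [pow_two, h]
  have hne : ((z : ℂ) / 2) ^ μ ≠ 0 := by simp [Complex.cpow_eq_zero_iff, h0]
  rw [hcp] at hc
  rw [besselI_eq _ hz, besselI_eq _ hz, Complex.cpow_neg, mul_comm μ (π : ℂ)]
  have hH : besselH μ ((z / 2) ^ 2) = π / Complex.sin (π * μ) *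
      (besselJ (-μ) (((z / 2) ^ 2 : ℝ) : ℂ) - ((z : ℂ) / 2) ^ μ * ((z : ℂ) / 2) ^ μ *
        besselJ μ (((z / 2) ^ 2 : ℝ) : ℂ)) := by
    rw [← hc]; field_simp
  rw [hH]
  field_simp

/-- For integer order the value is the limit in the order, which exists because `H` is continuous
in the order. -/
lemma besselK_eq (ν : ℂ) {z : ℝ} (hz : 0 < z) :
    besselK ν z = 1 / 2 * ((z : ℂ) / 2) ^ (-ν) * besselH ν ((z / 2) ^ 2) := by
  unfold besselK
  split_ifs with h
  · obtain ⟨n, rfl⟩ := h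
    refine Tendsto.limUnder_eq ?_
    have h0 : (z : ℂ) / 2 ≠ 0 := by
      have : (z : ℂ) ≠ 0 := by exact_mod_cast hz.ne'
      simpa using this
    have hcont : Continuous fun μ : ℂ =>
        1 / 2 * ((z : ℂ) / 2) ^ (-μ) * besselH μ ((z / 2) ^ 2) := by
      refine (continuous_const.mul ?_).mul (besselH_continuous (by positivity))
      exact continuous_neg.const_cpow (Or.inl h0)
    refine ((hcont.tendsto (n : ℂ)).mono_left nhdsWithin_le_nhds).congr' ?_
    have hball : Metric.ball (n : ℂ) 1 ∈ 𝓝[≠] (n : ℂ) :=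
      mem_nhdsWithin_of_mem_nhds (Metric.ball_mem_nhds _ one_pos)
    filter_upwards [hball, self_mem_nhdsWithin] with μ hμ hne
    refine (bessel_quotient_eq hz ?_).symm
    rintro ⟨k, rfl⟩
    refine hne ?_
    rw [Metric.mem_ball, dist_eq_norm, ← Int.cast_sub, Complex.norm_intCast, ← Int.cast_abs] at hμ
    have : |k - n| < 1 := by exact_mod_cast hμ
    have : k = n := by rw [Int.abs_lt_one_iff] at this; omega
    simp [this]
  · exact bessel_quotient_eq hz h

/-! ### The truncated Fourier integral -/

/-- Integration by parts: `e^{-ut²}` is monotone on `[0, N]`, so the oscillatory integral is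
bounded independently of `u` and `N`. -/
lemma norm_half_gaussian_le {ξ : ℝ} (hξ : ξ ≠ 0) {u N : ℝ} (hu : 0 < u) (hN : 0 ≤ N) :
    ‖∫ t in (0 : ℝ)..N, Complex.exp (-2 * (Real.pi : ℂ) * Complex.I * (t : ℂ) * (ξ : ℂ)) *
      ((Real.exp (-(u * t ^ 2)) : ℝ) : ℂ)‖ ≤ 3 / ‖-2 * (Real.pi : ℂ) * Complex.I * (ξ : ℂ)‖ := by
  set c : ℂ := -2 * (Real.pi : ℂ) * Complex.I * (ξ : ℂ) with hc
  have hpi : (π : ℂ) ≠ 0 := by exact_mod_cast Real.pi_ne_zero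
  have hξ' : (ξ : ℂ) ≠ 0 := by exact_mod_cast hξ
  have hc0 : c ≠ 0 := by simp [hc, hξ']
  have hcn : 0 < ‖c‖ := norm_pos_iff.2 hc0
  have hen : ∀ t : ℝ, ‖Complex.exp (c * t)‖ = 1 := by
    intro t
    have : c * t = ((-2 * π * ξ * t : ℝ) : ℂ) * Complex.I := by rw [hc]; push_cast; ring
    rw [this, Complex.norm_exp_ofReal_mul_I]
  have hv : ∀ t : ℝ, HasDerivAt (fun t : ℝ => Complex.exp (c * t) / c) (Complex.exp (c * t)) t := by
    intro t
    have h := (((hasDerivAt_id (t : ℂ)).const_mul c).cexp.div_const c).comp_ofReal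
    refine h.congr_deriv ?_
    simp only [id]; field_simp
  have hgr : ∀ t : ℝ, HasDerivAt (fun t : ℝ => Real.exp (-(u * t ^ 2)))
      (-(2 * u * t * Real.exp (-(u * t ^ 2)))) t := by
    intro t
    have h := (((hasDerivAt_pow 2 t).const_mul u).neg).exp
    refine h.congr_deriv ?_
    simp; ring
  have hg : ∀ t : ℝ, HasDerivAt (fun t : ℝ => ((Real.exp (-(u * t ^ 2)) : ℝ) : ℂ))
      ((-(2 * u * t * Real.exp (-(u * t ^ 2))) : ℝ) : ℂ) t := fun t => (hgr t).ofReal_comp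
  have hgc : Continuous fun t : ℝ => -(2 * u * t * Real.exp (-(u * t ^ 2))) := by fun_prop
  have hparts := intervalIntegral.integral_mul_deriv_eq_deriv_mul (a := 0) (b := N)
    (u := fun t : ℝ => ((Real.exp (-(u * t ^ 2)) : ℝ) : ℂ))
    (v := fun t : ℝ => Complex.exp (c * t) / c)
    (u' := fun t : ℝ => ((-(2 * u * t * Real.exp (-(u * t ^ 2))) : ℝ) : ℂ))
    (v' := fun t : ℝ => Complex.exp (c * t))
    (fun t _ => hg t) (fun t _ => hv t)
    ((Complex.continuous_ofReal.comp hgc).intervalIntegrable _ _)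
    (Continuous.intervalIntegrable (by fun_prop) _ _)
  have hrew : ∀ t : ℝ, Complex.exp (-2 * (Real.pi : ℂ) * Complex.I * (t : ℂ) * (ξ : ℂ)) *
      ((Real.exp (-(u * t ^ 2)) : ℝ) : ℂ) =
      ((Real.exp (-(u * t ^ 2)) : ℝ) : ℂ) * Complex.exp (c * t) := by
    intro t
    rw [mul_comm]; congr 2; rw [hc]; ring
  simp only [hrew]
  rw [hparts]
  have hI : ‖∫ t in (0 : ℝ)..N, ((-(2 * u * t * Real.exp (-(u * t ^ 2))) : ℝ) : ℂ) *
      (Complex.exp (c * t) / c)‖ ≤ 1 / ‖c‖ := by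
    have h1 : ‖∫ t in (0 : ℝ)..N, ((-(2 * u * t * Real.exp (-(u * t ^ 2))) : ℝ) : ℂ) *
      (Complex.exp (c * t) / c)‖ ≤
        ∫ t in (0 : ℝ)..N, -(-(2 * u * t * Real.exp (-(u * t ^ 2)))) / ‖c‖ := by
      refine intervalIntegral.norm_integral_le_of_norm_le hN (Eventually.of_forall fun t ht => ?_)
        ((hgc.neg.div_const _).intervalIntegrable _ _)
      have ht0 : 0 < t := ht.1
      rw [norm_mul, norm_div, hen, Complex.norm_real, norm_neg, neg_neg,
        Real.norm_of_nonneg (by positivity)]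
      exact le_of_eq (by ring)
    refine h1.trans ?_
    rw [intervalIntegral.integral_div, intervalIntegral.integral_neg,
      intervalIntegral.integral_eq_sub_of_hasDerivAt (fun t _ => hgr t)
        (hgc.intervalIntegrable _ _)]
    gcongr
    have := (Real.exp_pos (-(u * N ^ 2))).le
    simp
    linarith
  have hB : ∀ t : ℝ, ‖((Real.exp (-(u * t ^ 2)) : ℝ) : ℂ) * (Complex.exp (c * t) / c)‖
      ≤ 1 / ‖c‖ := by
    intro t
    rw [norm_mul, norm_div, hen, Complex.norm_of_nonneg (Real.exp_pos _).le]
    have : Real.exp (-(u * t ^ 2)) ≤ 1 := Real.exp_le_one_iff.2 (by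
      have : 0 ≤ u * t ^ 2 := by positivity
      linarith)
    exact mul_le_of_le_one_left (by positivity) this
  calc _ ≤ 1 / ‖c‖ + 1 / ‖c‖ + 1 / ‖c‖ :=
        (norm_sub_le _ _).trans (add_le_add ((norm_sub_le _ _).trans (add_le_add (hB N) (hB 0))) hI)
    _ = 3 / ‖c‖ := by ring

/-- The truncated Fourier integral of the Gaussian `e^{-ut²}`. -/
noncomputable def truncGauss (ξ N u : ℝ) : ℂ :=
  ∫ t in (-N)..N, Complex.exp (-2 * (Real.pi : ℂ) * Complex.I * (t : ℂ) * (ξ : ℂ)) *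
      ((Real.exp (-(u * t ^ 2)) : ℝ) : ℂ)

lemma norm_truncGauss_le {ξ : ℝ} (hξ : ξ ≠ 0) {u N : ℝ} (hu : 0 < u) (hN : 0 ≤ N) :
    ‖truncGauss ξ N u‖ ≤ 6 / ‖-2 * (Real.pi : ℂ) * Complex.I * (ξ : ℂ)‖ := by
  have hint : ∀ a b : ℝ, IntervalIntegrable (fun t : ℝ =>
      Complex.exp (-2 * (Real.pi : ℂ) * Complex.I * (t : ℂ) * (ξ : ℂ)) *
      ((Real.exp (-(u * t ^ 2)) : ℝ) : ℂ)) volume a b := fun a b =>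
    Continuous.intervalIntegrable (by fun_prop) a b
  unfold truncGauss
  rw [← intervalIntegral.integral_add_adjacent_intervals (hint (-N) 0) (hint 0 N)]
  have h1 := norm_half_gaussian_le hξ hu hN
  have h2 := norm_half_gaussian_le (neg_ne_zero.2 hξ) hu hN
  have h3 := intervalIntegral.integral_comp_neg (a := 0) (b := N) (fun t : ℝ =>
      Complex.exp (-2 * (Real.pi : ℂ) * Complex.I * (t : ℂ) * (ξ : ℂ)) *
      ((Real.exp (-(u * t ^ 2)) : ℝ) : ℂ))
  rw [neg_zero] at h3
  rw [← h3]
  have h4 : ∀ t : ℝ, Complex.exp (-2 * (Real.pi : ℂ) * Complex.I * ((-t : ℝ) : ℂ) * (ξ : ℂ)) *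
      ((Real.exp (-(u * (-t) ^ 2)) : ℝ) : ℂ) =
      Complex.exp (-2 * (Real.pi : ℂ) * Complex.I * (t : ℂ) * ((-ξ : ℝ) : ℂ)) *
      ((Real.exp (-(u * t ^ 2)) : ℝ) : ℂ) := by
    intro t
    rw [neg_sq]; congr 2; push_cast; ring
  simp only [h4]
  have h5 : ‖-2 * (Real.pi : ℂ) * Complex.I * ((-ξ : ℝ) : ℂ)‖ =
      ‖-2 * (Real.pi : ℂ) * Complex.I * (ξ : ℂ)‖ := by
    rw [Complex.ofReal_neg, mul_neg, norm_neg]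
  rw [h5] at h2
  calc _ ≤ _ := norm_add_le _ _
    _ ≤ _ := add_le_add h2 h1
    _ = _ := by ring

lemma truncGauss_tendsto (ξ : ℝ) {u : ℝ} (hu : 0 < u) :
    Tendsto (fun N => truncGauss ξ N u) atTop
      (𝓝 (((Real.sqrt (π / u) * Real.exp (-(π ^ 2 * ξ ^ 2 / u)) : ℝ)) : ℂ)) := by
  have hre : 0 < ((u : ℂ)).re := by simpa using hu
  have hF := fourierIntegral_gaussian hre (-2 * π * ξ : ℂ)
  have hrew : ∀ t : ℝ, Complex.exp (Complex.I * (-2 * π * ξ : ℂ) * t) *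
      Complex.exp (-(u : ℂ) * (t : ℂ) ^ 2) =
      Complex.exp (-2 * (Real.pi : ℂ) * Complex.I * (t : ℂ) * (ξ : ℂ)) *
      ((Real.exp (-(u * t ^ 2)) : ℝ) : ℂ) := by
    intro t
    push_cast
    congr 2
    · ring
    · ring
  simp only [hrew] at hF
  have hint : Integrable fun t : ℝ =>
      Complex.exp (-2 * (Real.pi : ℂ) * Complex.I * (t : ℂ) * (ξ : ℂ)) *
      ((Real.exp (-(u * t ^ 2)) : ℝ) : ℂ) := by
    refine (integrable_exp_neg_mul_sq hu).mono' (Continuous.aestronglyMeasurable (by fun_prop))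
      (Eventually.of_forall fun t => ?_)
    have : (-2 * (Real.pi : ℂ) * Complex.I * (t : ℂ) * (ξ : ℂ)) =
      ((-2 * π * t * ξ : ℝ) : ℂ) * Complex.I := by push_cast; ring
    rw [norm_mul, this, Complex.norm_exp_ofReal_mul_I, one_mul,
      Complex.norm_of_nonneg (Real.exp_pos _).le, neg_mul]
  have hval : (((Real.sqrt (π / u) * Real.exp (-(π ^ 2 * ξ ^ 2 / u)) : ℝ)) : ℂ) =
      (π / u : ℂ) ^ (1 / 2 : ℂ) * Complex.exp (-(-2 * π * ξ : ℂ) ^ 2 / (4 * u)) := by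
    rw [Real.sqrt_eq_rpow, Complex.ofReal_mul, Complex.ofReal_cpow (by positivity)]
    push_cast
    congr 2
    ring
  rw [hval, ← hF]
  exact intervalIntegral_tendsto_integral hint tendsto_neg_atTop_atBot tendsto_id

/-! ### Subordination to Gaussians and passage to the limit -/

lemma integrableOn_rpow_mul_exp {a X : ℝ} (ha : 0 < a) (hX : 0 < X) :
    IntegrableOn (fun u : ℝ => u ^ (a - 1) * Real.exp (-(X * u))) (Ioi 0) := by
  have h := integrableOn_rpow_mul_exp_neg_mul_rpow (s := a - 1) (p := 1) (b := X)
    (by linarith) one_pos hX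
  simpa only [Real.rpow_one, neg_mul] using h

/-- Writing `(X+t²)^{-a}` as a Gamma integral and exchanging the order of integration. -/
lemma trunc_integral_eq {a X : ℝ} (ha : 0 < a) (hX : 0 < X) (ξ : ℝ) {N : ℝ} (hN : 0 ≤ N) :
    ∫ t in (-N)..N, Complex.exp (-2 * (Real.pi : ℂ) * Complex.I * (t : ℂ) * (ξ : ℂ)) *
        (((X + t ^ 2) ^ (-a) : ℝ) : ℂ) =
      ((Real.Gamma a : ℝ) : ℂ)⁻¹ * ∫ u in Ioi (0 : ℝ),
        ((u ^ (a - 1) * Real.exp (-(X * u)) : ℝ) : ℂ) * truncGauss ξ N u := by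
  have hG : Real.Gamma a ≠ 0 := (Real.Gamma_pos_of_pos ha).ne'
  have hGc : ((Real.Gamma a : ℝ) : ℂ) ≠ 0 := by exact_mod_cast hG
  have hNN : -N ≤ N := by linarith
  set F : ℝ → ℝ → ℂ := fun t u =>
    Complex.exp (-2 * (Real.pi : ℂ) * Complex.I * (t : ℂ) * (ξ : ℂ)) *
      ((u ^ (a - 1) * Real.exp (-((X + t ^ 2) * u)) : ℝ) : ℂ) with hFdef
  have hen : ∀ t : ℝ,
      ‖Complex.exp (-2 * (Real.pi : ℂ) * Complex.I * (t : ℂ) * (ξ : ℂ))‖ = 1 := by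
    intro t
    have : (-2 * (Real.pi : ℂ) * Complex.I * (t : ℂ) * (ξ : ℂ)) =
      ((-2 * π * t * ξ : ℝ) : ℂ) * Complex.I := by push_cast; ring
    rw [this, Complex.norm_exp_ofReal_mul_I]
  have hint : Integrable (Function.uncurry F)
      ((volume.restrict (Ioc (-N) N)).prod (volume.restrict (Ioi (0 : ℝ)))) := by
    have hb : Integrable (fun p : ℝ × ℝ => (1 : ℝ) * (p.2 ^ (a - 1) * Real.exp (-(X * p.2))))
        ((volume.restrict (Ioc (-N) N)).prod (volume.restrict (Ioi (0 : ℝ)))) :=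
      Integrable.mul_prod (integrable_const (1 : ℝ)) (integrableOn_rpow_mul_exp ha hX)
    refine hb.mono' ?_ ?_
    · refine Measurable.aestronglyMeasurable ?_
      simp only [hFdef, Function.uncurry_def]
      refine Measurable.mul (by fun_prop) (Complex.measurable_ofReal.comp ?_)
      exact (measurable_snd.pow_const _).mul (by fun_prop)
    · rw [Measure.prod_restrict]
      refine (ae_restrict_iff' (measurableSet_Ioc.prod measurableSet_Ioi)).2
        (Eventually.of_forall ?_)
      rintro ⟨t, u⟩ ⟨-, hu⟩
      have hu : 0 < u := hu
      simp only [hFdef, Function.uncurry_apply_pair]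
      rw [norm_mul, hen, one_mul, one_mul, Complex.norm_of_nonneg (by positivity)]
      gcongr
      nlinarith [sq_nonneg t]
  have hswap := integral_integral_swap hint
  have hL : ∀ t : ℝ, ∫ u in Ioi (0 : ℝ), F t u = ((Real.Gamma a : ℝ) : ℂ) *
      (Complex.exp (-2 * (Real.pi : ℂ) * Complex.I * (t : ℂ) * (ξ : ℂ)) *
        (((X + t ^ 2) ^ (-a) : ℝ) : ℂ)) := by
    intro t
    have hr : 0 < X + t ^ 2 := by positivity
    simp only [hFdef]
    rw [integral_const_mul, integral_complex_ofReal, Real.integral_rpow_mul_exp_neg_mul_Ioi ha hr,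
      one_div, Real.inv_rpow hr.le, ← Real.rpow_neg hr.le]
    push_cast
    ring
  have hR : ∀ u : ℝ, ∫ t in Ioc (-N) N, F t u =
      ((u ^ (a - 1) * Real.exp (-(X * u)) : ℝ) : ℂ) * truncGauss ξ N u := by
    intro u
    unfold truncGauss
    rw [intervalIntegral.integral_of_le hNN, ← integral_const_mul]
    congr 1
    ext t
    have : -((X + t ^ 2) * u) = -(X * u) + -(u * t ^ 2) := by ring
    simp only [hFdef]
    rw [this, Real.exp_add]
    push_cast
    ring
  simp only [hL, hR] at hswap
  rw [integral_const_mul, ← intervalIntegral.integral_of_le hNN] at hswap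
  rw [← hswap, inv_mul_cancel_left₀ hGc]

/-- Dominated convergence: `truncGauss ξ N` is bounded uniformly in `N` and `u`, so no condition
such as `a > 1/2` is needed. -/
lemma trunc_integral_tendsto {a X : ℝ} (ha : 0 < a) (hX : 0 < X) {ξ : ℝ} (hξ : ξ ≠ 0) :
    Tendsto (fun N : ℝ => ∫ u in Ioi (0 : ℝ),
        ((u ^ (a - 1) * Real.exp (-(X * u)) : ℝ) : ℂ) * truncGauss ξ N u) atTop
      (𝓝 (∫ u in Ioi (0 : ℝ), ((u ^ (a - 1) * Real.exp (-(X * u)) : ℝ) : ℂ) *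
        (((Real.sqrt (π / u) * Real.exp (-(π ^ 2 * ξ ^ 2 / u)) : ℝ)) : ℂ))) := by
  set C : ℝ := 6 / ‖-2 * (Real.pi : ℂ) * Complex.I * (ξ : ℂ)‖ with hC
  refine tendsto_integral_filter_of_dominated_convergence
    (fun u : ℝ => u ^ (a - 1) * Real.exp (-(X * u)) * C) ?_ ?_
    ((integrableOn_rpow_mul_exp ha hX).mul_const C) ?_
  · refine Eventually.of_forall fun N => ?_
    refine AEStronglyMeasurable.mul ?_ ?_
    · exact (Complex.measurable_ofReal.comp
        ((measurable_id.pow_const _).mul (by fun_prop))).aestronglyMeasurable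
    · refine Continuous.aestronglyMeasurable ?_
      unfold truncGauss
      exact intervalIntegral.continuous_parametric_intervalIntegral_of_continuous' (by fun_prop) _ _
  · filter_upwards [eventually_ge_atTop 0] with N hN
    refine (ae_restrict_iff' measurableSet_Ioi).2 (Eventually.of_forall fun u hu => ?_)
    have hu : 0 < u := hu
    rw [norm_mul, Complex.norm_of_nonneg (by positivity)]
    exact mul_le_mul_of_nonneg_left (norm_truncGauss_le hξ hu hN) (by positivity)
  · refine (ae_restrict_iff' measurableSet_Ioi).2 (Eventually.of_forall fun u hu => ?_)
    exact (truncGauss_tendsto ξ hu).const_mul _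

/-- The substitution `u ↦ X u` turns the limiting integral into `besselH`. -/
lemma limit_integral_eq {a X : ℝ} (hX : 0 < X) (ξ : ℝ) :
    ∫ u in Ioi (0 : ℝ), ((u ^ (a - 1) * Real.exp (-(X * u)) : ℝ) : ℂ) *
        (((Real.sqrt (π / u) * Real.exp (-(π ^ 2 * ξ ^ 2 / u)) : ℝ)) : ℂ) =
      ((Real.sqrt π * X ^ (-(a - 1 / 2)) : ℝ) : ℂ) *
        besselH ((a - 1 / 2 : ℝ) : ℂ) (π ^ 2 * ξ ^ 2 * X) := by
  have h := mellin_comp_mul_left (kerH (π ^ 2 * ξ ^ 2 * X)) ((a - 1 / 2 : ℝ) : ℂ) hX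
  have hc : ((Real.sqrt π * X ^ (-(a - 1 / 2)) : ℝ) : ℂ) =
      ((Real.sqrt π : ℝ) : ℂ) * (X : ℂ) ^ (-((a - 1 / 2 : ℝ) : ℂ)) := by
    rw [Complex.ofReal_mul, Complex.ofReal_cpow hX.le]
    push_cast
    rfl
  rw [hc, mul_assoc]
  unfold besselH
  rw [smul_eq_mul] at h
  rw [← h]
  unfold mellin
  rw [← integral_const_mul]
  refine setIntegral_congr_fun measurableSet_Ioi fun u hu => ?_
  have hu : 0 < u := hu
  have e1 : (u : ℂ) ^ (((a - 1 / 2 : ℝ) : ℂ) - 1) = ((u ^ (a - 1 / 2 - 1) : ℝ) : ℂ) := by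
    rw [Complex.ofReal_cpow hu.le]; push_cast; rfl
  have e2 : -(X * u) - π ^ 2 * ξ ^ 2 * X / (X * u) = -(X * u) + -(π ^ 2 * ξ ^ 2 / u) := by
    field_simp
    ring
  have e3 : u ^ (a - 1) = u ^ (a - 1 / 2 - 1) * Real.sqrt u := by
    rw [Real.sqrt_eq_rpow, ← Real.rpow_add hu]; congr 1; ring
  have hs : Real.sqrt u ≠ 0 := (Real.sqrt_pos.2 hu).ne'
  simp only [kerH, smul_eq_mul]
  rw [e1, e2, e3, Real.exp_add, Real.sqrt_div Real.pi_pos.le]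
  norm_cast
  field_simp

lemma const_identity {s x ξ : ℝ} (hx : x ≠ 0) (hξ : ξ ≠ 0) :
    Real.sqrt π * (x ^ 4) ^ (-(s / 4 - 1 / 2)) =
      π ^ (s / 4) * |x| ^ (1 - s / 2) * |ξ| ^ ((s - 2) / 4) *
        (2 * π * x ^ 2 * |ξ| / 2) ^ (-((s - 2) / 4)) := by
  have hx' : 0 < |x| := abs_pos.2 hx
  have hξ' : 0 < |ξ| := abs_pos.2 hξ
  have hp := Real.pi_pos
  have h4 : x ^ 4 = |x| ^ (4 : ℝ) := by
    have h : |x| ^ (4 : ℝ) = |x| ^ 4 := by exact_mod_cast Real.rpow_natCast |x| 4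
    rw [h, (by decide : Even 4).pow_abs]
  have h2 : x ^ 2 = |x| ^ (2 : ℝ) := by
    have h : |x| ^ (2 : ℝ) = |x| ^ 2 := by exact_mod_cast Real.rpow_natCast |x| 2
    rw [h, sq_abs]
  have h3 : 2 * π * x ^ 2 * |ξ| / 2 = π * |x| ^ (2 : ℝ) * |ξ| := by rw [h2]; ring
  rw [h3, h4, Real.mul_rpow (by positivity) hξ'.le, Real.mul_rpow hp.le (by positivity),
    ← Real.rpow_mul hx'.le, ← Real.rpow_mul hx'.le, Real.sqrt_eq_rpow]
  have e1 : π ^ (1 / 2 : ℝ) = π ^ (s / 4) * π ^ (-((s - 2) / 4)) := by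
    rw [← Real.rpow_add hp]; congr 1; ring
  have e2 : |x| ^ (4 * -(s / 4 - 1 / 2)) = |x| ^ (1 - s / 2) * |x| ^ (2 * -((s - 2) / 4)) := by
    rw [← Real.rpow_add hx']; congr 1; ring
  have e3 : |ξ| ^ ((s - 2) / 4) * |ξ| ^ (-((s - 2) / 4)) = 1 := by
    rw [← Real.rpow_add hξ', add_neg_cancel, Real.rpow_zero]
  rw [e1, e2]
  linear_combination -(π ^ (s / 4) * π ^ (-((s - 2) / 4)) * |x| ^ (1 - s / 2) *
    |x| ^ (2 * -((s - 2) / 4))) * e3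

/-- **Formula (3.4).** For `s > 0` and nonzero reals `x`, `ξ₂`, the improper Riemann integral
`∫_{-∞}^∞ e^{-2πitξ₂} (x⁴+t²)^{-s/4} dt` converges (as the limit of `∫_{-N}^N` as `N → ∞`)
to `(2π^{s/4}/Γ(s/4)) |x|^{1-s/2} |ξ₂|^{(s-2)/4} K_{(s-2)/4}(2πx²|ξ₂|)`. -/
theorem koranyi_t_integral (s x ξ₂ : ℝ) (hs : 0 < s) (hx : x ≠ 0) (hξ : ξ₂ ≠ 0) :
    Tendsto (fun N : ℝ => ∫ t in (-N)..N,
        Complex.exp (-2 * (Real.pi : ℂ) * Complex.I * (t : ℂ) * (ξ₂ : ℂ)) *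
          (((x ^ 4 + t ^ 2) ^ (-(s / 4)) : ℝ) : ℂ))
      atTop
      (nhds (((2 * Real.pi ^ (s / 4) / Real.Gamma (s / 4) * |x| ^ (1 - s / 2) *
            |ξ₂| ^ ((s - 2) / 4) : ℝ) : ℂ) *
          besselK (((s - 2) / 4 : ℝ) : ℂ) ((2 * Real.pi * x ^ 2 * |ξ₂| : ℝ) : ℂ))) := by
  have hX : 0 < x ^ 4 := by positivity
  have ha : 0 < s / 4 := by positivity
  have hz : 0 < 2 * Real.pi * x ^ 2 * |ξ₂| := by
    have := Real.pi_pos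
    have := abs_pos.2 hξ
    positivity
  have hlim := ((trunc_integral_tendsto ha hX hξ).const_mul
    (((Real.Gamma (s / 4) : ℝ) : ℂ)⁻¹)).congr'
    (f₂ := fun N : ℝ => ∫ t in (-N)..N,
        Complex.exp (-2 * (Real.pi : ℂ) * Complex.I * (t : ℂ) * (ξ₂ : ℂ)) *
          (((x ^ 4 + t ^ 2) ^ (-(s / 4)) : ℝ) : ℂ)) (by
      filter_upwards [eventually_ge_atTop 0] with N hN
      exact (trunc_integral_eq ha hX ξ₂ hN).symm)
  convert hlim using 2
  rw [limit_integral_eq hX, const_identity hx hξ, besselK_eq _ hz]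
  have hν : s / 4 - 1 / 2 = (s - 2) / 4 := by ring
  have hw : (2 * Real.pi * x ^ 2 * |ξ₂| / 2) ^ 2 = π ^ 2 * ξ₂ ^ 2 * x ^ 4 := by
    rw [← sq_abs ξ₂]; ring
  have hp : (((2 * Real.pi * x ^ 2 * |ξ₂| : ℝ) : ℂ) / 2) ^ (-(((s - 2) / 4 : ℝ) : ℂ)) =
      (((2 * Real.pi * x ^ 2 * |ξ₂| / 2) ^ (-((s - 2) / 4)) : ℝ) : ℂ) := by
    rw [Complex.ofReal_cpow (by positivity)]
    push_cast
    rfl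
  rw [hν, hw, hp]
  simp only [Complex.ofReal_mul, Complex.ofReal_div]
  push_cast
  ring
end

section
/- For each s ∈ (1,3) there is a constant C_s > 0 such that for every nonzero ξ₂ ∈ ℝ, every x ∈ ℝ, and every N > 0, the tail of the improper Riemann integral satisfies |∫_{−∞}^∞ e^{−2πitξ₂}(x⁴+t²)^{−s/4} dt − ∫_{−N}^N e^{−2πitξ₂}(x⁴+t²)^{−s/4} dt| ≤ C_s / (|ξ₂| (|x|^s + N^{s/2})). -/
/-!
The weight `g t = (x⁴ + t²)^(-s/4)` is positive and decreasing on `(0, ∞)`, so one integration by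
parts against the character `e^{-2πitξ}` bounds `∫_N^M e^{-2πitξ} g(t) dt` by `g(N) / (π|ξ|)`
(`norm_integral_character_mul_le`). The reflection `t ↦ -t` gives the same bound on `[-M, -N]`, and
hence `norm_symmInt_sub_le`. Since `g(N) → 0`, the symmetric integrals are Cauchy; letting `M → ∞`
gives the tail bound with `2 g(N) / (π|ξ|)`, and `(x⁴ + N²)^(s/4)` dominates both `|x|^s` and
`N^(s/2)`.

The case `x = 0`, `2 ≤ s`, where the integrand is not integrable near `0`, needs no separate
computation: away from `0` the integrand is continuous, so integrability on `[-N, N]` and on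
`[-M, M]` are equivalent, and when both fail both integrals have the junk value `0`.
-/

open Filter Set MeasureTheory
open scoped Real

/-- The Korányi weight `(x⁴ + t²)^(-s/4)`. -/
noncomputable def koranyiWeight (s x t : ℝ) : ℝ := (x ^ 4 + t ^ 2) ^ (-(s / 4))

/-- The integrand `e^{-2πitξ} (x⁴ + t²)^(-s/4)`. -/
noncomputable def koranyiIntegrand (s ξ x t : ℝ) : ℂ :=
  Complex.exp (-2 * (Real.pi : ℂ) * Complex.I * (t : ℂ) * (ξ : ℂ)) *
    (((x ^ 4 + t ^ 2) ^ (-(s / 4)) : ℝ) : ℂ)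

lemma base_pos (x : ℝ) {t : ℝ} (ht : t ≠ 0) : 0 < x ^ 4 + t ^ 2 := by positivity

lemma hasDerivAt_koranyiWeight (s x : ℝ) {t : ℝ} (ht : t ≠ 0) :
    HasDerivAt (koranyiWeight s x)
      (2 * t * (-(s / 4)) * (x ^ 4 + t ^ 2) ^ (-(s / 4) - 1)) t := by
  have h : HasDerivAt (fun t : ℝ => x ^ 4 + t ^ 2) (2 * t) t := by
    simpa using (hasDerivAt_pow 2 t).const_add (x ^ 4)
  exact h.rpow_const (Or.inl (base_pos x ht).ne')

lemma norm_character (ξ t : ℝ) :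
    ‖Complex.exp (-2 * (Real.pi : ℂ) * Complex.I * (t : ℂ) * (ξ : ℂ))‖ = 1 := by
  have : -2 * (Real.pi : ℂ) * Complex.I * (t : ℂ) * (ξ : ℂ)
      = ((-2 * Real.pi * t * ξ : ℝ) : ℂ) * Complex.I := by push_cast; ring
  rw [this, Complex.norm_exp_ofReal_mul_I]

lemma continuousOn_koranyiIntegrand (s ξ x : ℝ) :
    ContinuousOn (koranyiIntegrand s ξ x) {t | t ≠ 0} := by
  unfold koranyiIntegrand
  refine ContinuousOn.mul (by fun_prop) ?_
  refine Complex.continuous_ofReal.comp_continuousOn ?_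
  exact ContinuousOn.rpow_const (by fun_prop) fun t ht => Or.inl (base_pos x ht).ne'

/-- Integration by parts: the boundary terms contribute `g(N) + g(M)`, and as `g` decreases its
total variation on `[N, M]` is `g(N) - g(M)`. -/
lemma norm_integral_character_mul_le {s : ℝ} (hs : 0 < s) {ξ : ℝ} (hξ : ξ ≠ 0) (x : ℝ)
    {N M : ℝ} (hN : 0 < N) (hNM : N ≤ M) :
    ‖∫ t in N..M, koranyiIntegrand s ξ x t‖ ≤ koranyiWeight s x N / (π * |ξ|) := by
  set g := koranyiWeight s x with hg
  set g' : ℝ → ℝ := fun t => 2 * t * (-(s / 4)) * (x ^ 4 + t ^ 2) ^ (-(s / 4) - 1) with hg'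
  set c : ℂ := -2 * (Real.pi : ℂ) * Complex.I * (ξ : ℂ) with hc
  have hc_norm : ‖c‖ = 2 * π * |ξ| := by
    simp [hc, abs_of_pos Real.pi_pos]
  have hc0 : c ≠ 0 := by
    rw [← norm_pos_iff, hc_norm]; positivity
  set e : ℝ → ℂ := fun t => Complex.exp (-2 * (Real.pi : ℂ) * Complex.I * (t : ℂ) * (ξ : ℂ))
    with he
  have he_norm : ∀ t, ‖e t‖ = 1 := norm_character ξ
  have huIcc : uIcc N M = Icc N M := uIcc_of_le hNM
  have hpos : ∀ t ∈ uIcc N M, 0 < t := fun t ht => by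
    rw [huIcc] at ht; exact hN.trans_le ht.1
  have hgd : ∀ t ∈ uIcc N M, HasDerivAt g (g' t) t := fun t ht =>
    hasDerivAt_koranyiWeight s x (hpos t ht).ne'
  have hgC : ∀ t ∈ uIcc N M, HasDerivAt (fun t => (g t : ℂ)) (g' t : ℂ) t := fun t ht =>
    (hgd t ht).ofReal_comp
  have hed : ∀ t ∈ uIcc N M, HasDerivAt (fun t => e t / c) (e t) t := by
    intro t _
    have h1 : HasDerivAt (fun t : ℝ => -2 * (Real.pi : ℂ) * Complex.I * (t : ℂ) * (ξ : ℂ)) c t := by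
      have := ((hasDerivAt_id t).ofReal_comp.const_mul
        (-2 * (Real.pi : ℂ) * Complex.I)).mul_const (ξ : ℂ)
      simpa [hc] using this
    have h2 := h1.cexp.div_const c
    rwa [mul_div_assoc, div_self hc0, mul_one] at h2
  have hg'c : ContinuousOn g' (uIcc N M) := by
    refine ContinuousOn.mul (by fun_prop) ?_
    exact ContinuousOn.rpow_const (by fun_prop)
      fun t ht => Or.inl (base_pos x (hpos t ht).ne').ne'
  have hg'i : IntervalIntegrable g' volume N M := hg'c.intervalIntegrable
  have hg'iC : IntervalIntegrable (fun t => (g' t : ℂ)) volume N M :=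
    (Complex.continuous_ofReal.comp_continuousOn hg'c).intervalIntegrable
  have hec : Continuous e := by fun_prop
  have hparts := intervalIntegral.integral_mul_deriv_eq_deriv_mul hgC hed hg'iC
    (hec.intervalIntegrable N M)
  have hint : ∫ t in N..M, koranyiIntegrand s ξ x t = ∫ t in N..M, (g t : ℂ) * e t := by
    refine intervalIntegral.integral_congr fun t _ => ?_
    simp only [koranyiIntegrand, hg, he, koranyiWeight, mul_comm]
  have hgpos : ∀ t, 0 ≤ g t := fun t => Real.rpow_nonneg (by positivity) _
  have hterm : ∀ t, ‖(g t : ℂ) * (e t / c)‖ = g t / ‖c‖ := fun t => by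
    rw [norm_mul, norm_div, he_norm, Complex.norm_real, Real.norm_of_nonneg (hgpos t)]; ring
  have hvar : ‖∫ t in N..M, (g' t : ℂ) * (e t / c)‖ ≤ (g N - g M) / ‖c‖ := by
    have h1 : ∫ t in N..M, -g' t / ‖c‖ = (g N - g M) / ‖c‖ := by
      rw [intervalIntegral.integral_div, intervalIntegral.integral_neg,
        intervalIntegral.integral_eq_sub_of_hasDerivAt hgd hg'i, neg_sub]
    rw [← h1]
    refine intervalIntegral.norm_integral_le_of_norm_le hNM ?_ (hg'i.neg.div_const _)
    refine Eventually.of_forall fun t ht => ?_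
    have ht0 : 0 < t := hN.trans ht.1
    have hneg : g' t ≤ 0 := by
      have := Real.rpow_nonneg (base_pos x ht0.ne').le (-(s / 4) - 1)
      have h2 : 2 * t * (-(s / 4)) ≤ 0 := by nlinarith [mul_pos ht0 hs]
      exact mul_nonpos_of_nonpos_of_nonneg h2 this
    rw [norm_mul, norm_div, he_norm, Complex.norm_real, Real.norm_of_nonpos hneg]
    exact le_of_eq (by ring)
  rw [hint, hparts]
  calc _ ≤ ‖(g M : ℂ) * (e M / c)‖ + ‖(g N : ℂ) * (e N / c)‖
        + ‖∫ t in N..M, (g' t : ℂ) * (e t / c)‖ :=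
        (norm_sub_le _ _).trans (add_le_add_left (norm_sub_le _ _) _)
    _ ≤ g M / ‖c‖ + g N / ‖c‖ + (g N - g M) / ‖c‖ := by
        rw [hterm, hterm]; exact add_le_add_right hvar _
    _ = g N / (π * |ξ|) := by
        rw [hc_norm]
        have := Real.pi_pos
        have := abs_pos.2 hξ
        field_simp
        ring

lemma koranyiIntegrand_neg (s ξ x t : ℝ) :
    koranyiIntegrand s ξ x (-t) = koranyiIntegrand s (-ξ) x t := by
  simp [koranyiIntegrand]

/-- The bound includes the non-integrable case, in which both integrals are `0` by convention. -/
lemma norm_symmInt_sub_le {s : ℝ} (hs : 0 < s) {ξ : ℝ} (hξ : ξ ≠ 0) (x : ℝ)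
    {N M : ℝ} (hN : 0 < N) (hNM : N ≤ M) :
    ‖(∫ t in (-M)..M, koranyiIntegrand s ξ x t) - ∫ t in (-N)..N, koranyiIntegrand s ξ x t‖
      ≤ 2 * koranyiWeight s x N / (π * |ξ|) := by
  have hr : IntervalIntegrable (koranyiIntegrand s ξ x) volume N M := by
    refine ((continuousOn_koranyiIntegrand s ξ x).mono fun t ht => ?_).intervalIntegrable
    rw [uIcc_of_le hNM] at ht
    exact (hN.trans_le ht.1).ne'
  have hl : IntervalIntegrable (koranyiIntegrand s ξ x) volume (-M) (-N) := by
    refine ((continuousOn_koranyiIntegrand s ξ x).mono fun t ht => ?_).intervalIntegrable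
    rw [uIcc_of_le (by linarith)] at ht
    have := ht.2
    exact (show t < 0 by linarith).ne
  by_cases hi : IntervalIntegrable (koranyiIntegrand s ξ x) volume (-N) N
  · have hsplit : (∫ t in (-M)..M, koranyiIntegrand s ξ x t)
          - ∫ t in (-N)..N, koranyiIntegrand s ξ x t
        = (∫ t in (-M)..(-N), koranyiIntegrand s ξ x t)
          + ∫ t in N..M, koranyiIntegrand s ξ x t := by
      rw [← intervalIntegral.integral_add_adjacent_intervals (hl.trans hi) hr,
        ← intervalIntegral.integral_add_adjacent_intervals hl hi]
      ring
    have hrefl : ∫ t in (-M)..(-N), koranyiIntegrand s ξ x t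
        = ∫ t in N..M, koranyiIntegrand s (-ξ) x t := by
      rw [← intervalIntegral.integral_comp_neg]
      simp only [koranyiIntegrand_neg]
    have h1 := norm_integral_character_mul_le hs hξ x hN hNM
    have h2 := norm_integral_character_mul_le hs (neg_ne_zero.2 hξ) x hN hNM
    rw [abs_neg] at h2
    rw [hsplit, hrefl]
    refine (norm_add_le _ _).trans ((add_le_add h2 h1).trans (le_of_eq ?_))
    ring
  · have hi' : ¬ IntervalIntegrable (koranyiIntegrand s ξ x) volume (-M) M := fun h =>
      hi ((hl.symm.trans h).trans hr.symm)
    rw [intervalIntegral.integral_undef hi, intervalIntegral.integral_undef hi', sub_zero,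
      norm_zero]
    have : 0 ≤ koranyiWeight s x N := Real.rpow_nonneg (by positivity) _
    positivity

/-- `(x⁴ + N²)^(s/4)` dominates both `(x⁴)^(s/4) = |x|^s` and `(N²)^(s/4) = N^(s/2)`. -/
lemma koranyiWeight_le {s : ℝ} (hs : 0 < s) (x : ℝ) {N : ℝ} (hN : 0 < N) :
    koranyiWeight s x N ≤ 2 / (|x| ^ s + N ^ (s / 2)) := by
  have h1 : |x| ^ s ≤ (x ^ 4 + N ^ 2) ^ (s / 4) := by
    have : |x| ^ s = (x ^ 4) ^ (s / 4) := by
      rw [← (show Even 4 by decide).pow_abs x, ← Real.rpow_natCast, ← Real.rpow_mul (abs_nonneg x)]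
      congr 1; push_cast; ring
    rw [this]
    exact Real.rpow_le_rpow (by positivity) (by nlinarith [sq_nonneg N]) (by positivity)
  have h2 : N ^ (s / 2) ≤ (x ^ 4 + N ^ 2) ^ (s / 4) := by
    have : N ^ (s / 2) = (N ^ 2) ^ (s / 4) := by
      rw [← Real.rpow_natCast, ← Real.rpow_mul hN.le]
      congr 1; push_cast; ring
    rw [this]
    exact Real.rpow_le_rpow (by positivity) (by nlinarith [sq_nonneg (x ^ 2)]) (by positivity)
  have hb := base_pos x hN.ne'
  have hp : 0 < (x ^ 4 + N ^ 2) ^ (s / 4) := Real.rpow_pos_of_pos hb _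
  have hq : 0 < |x| ^ s + N ^ (s / 2) :=
    add_pos_of_nonneg_of_pos (Real.rpow_nonneg (abs_nonneg x) _) (Real.rpow_pos_of_pos hN _)
  rw [koranyiWeight, Real.rpow_neg hb.le, ← one_div, div_le_div_iff₀ hp hq]
  linarith

lemma tendsto_koranyiWeight {s : ℝ} (hs : 0 < s) (x : ℝ) :
    Tendsto (koranyiWeight s x) atTop (nhds 0) := by
  have h : Tendsto (fun t : ℝ => x ^ 4 + t ^ 2) atTop atTop :=
    tendsto_atTop_add_const_left _ _ (tendsto_pow_atTop two_ne_zero)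
  exact (tendsto_rpow_neg_atTop (by positivity : 0 < s / 4)).comp h

/-- **Estimate (3.5).** For each `s ∈ (1,3)` there is `C_s > 0` such that for every nonzero
`ξ₂`, every `x ∈ ℝ` and every `N > 0`, the improper Riemann integral
`∫_{-∞}^∞ e^{-2πitξ₂}(x⁴+t²)^{-s/4} dt` (the limit `L` of `∫_{-N}^N` as `N → ∞`) satisfies
`|L - ∫_{-N}^N e^{-2πitξ₂}(x⁴+t²)^{-s/4} dt| ≤ C_s / (|ξ₂| (|x|^s + N^{s/2}))`. -/
theorem koranyi_t_integral_tail (s : ℝ) (hs : s ∈ Set.Ioo (1 : ℝ) 3) :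
    ∃ C : ℝ, 0 < C ∧ ∀ (ξ₂ : ℝ), ξ₂ ≠ 0 → ∀ x : ℝ,
      ∃ L : ℂ,
        Tendsto (fun N : ℝ => ∫ t in (-N)..N,
            Complex.exp (-2 * (Real.pi : ℂ) * Complex.I * (t : ℂ) * (ξ₂ : ℂ)) *
              (((x ^ 4 + t ^ 2) ^ (-(s / 4)) : ℝ) : ℂ))
          atTop (nhds L) ∧
        ∀ N : ℝ, 0 < N →
          ‖L - ∫ t in (-N)..N,
              Complex.exp (-2 * (Real.pi : ℂ) * Complex.I * (t : ℂ) * (ξ₂ : ℂ)) *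
                (((x ^ 4 + t ^ 2) ^ (-(s / 4)) : ℝ) : ℂ)‖ ≤
            C / (|ξ₂| * (|x| ^ s + N ^ (s / 2))) := by
  have hs0 : 0 < s := by linarith [hs.1]
  refine ⟨4 / π, by positivity, fun ξ hξ x => ?_⟩
  change ∃ L : ℂ, Tendsto (fun N : ℝ => ∫ t in (-N)..N, koranyiIntegrand s ξ x t) atTop (nhds L) ∧
    ∀ N : ℝ, 0 < N → ‖L - ∫ t in (-N)..N, koranyiIntegrand s ξ x t‖ ≤
      4 / π / (|ξ| * (|x| ^ s + N ^ (s / 2)))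
  have hξ' : 0 < |ξ| := abs_pos.2 hξ
  have hcauchy : CauchySeq (fun N : ℝ => ∫ t in (-N)..N, koranyiIntegrand s ξ x t) := by
    refine Metric.cauchySeq_iff'.2 fun ε hε => ?_
    have hB : Tendsto (fun N => 2 * koranyiWeight s x N / (π * |ξ|)) atTop (nhds 0) := by
      simpa using ((tendsto_koranyiWeight hs0 x).const_mul 2).div_const (π * |ξ|)
    obtain ⟨N, hNε, hN⟩ := ((hB.eventually_lt_const hε).and (eventually_gt_atTop 0)).exists
    refine ⟨N, fun M hM => ?_⟩
    rw [dist_eq_norm]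
    exact (norm_symmInt_sub_le hs0 hξ x hN hM).trans_lt hNε
  obtain ⟨L, hL⟩ := cauchySeq_tendsto_of_complete hcauchy
  refine ⟨L, hL, fun N hN => ?_⟩
  have hlim : ‖L - ∫ t in (-N)..N, koranyiIntegrand s ξ x t‖
      ≤ 2 * koranyiWeight s x N / (π * |ξ|) := by
    refine le_of_tendsto (hL.sub_const _).norm ?_
    filter_upwards [eventually_ge_atTop N] with M hM
    exact norm_symmInt_sub_le hs0 hξ x hN hM
  have hq : 0 < |x| ^ s + N ^ (s / 2) :=
    add_pos_of_nonneg_of_pos (Real.rpow_nonneg (abs_nonneg x) _) (Real.rpow_pos_of_pos hN _)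
  calc _ ≤ 2 * koranyiWeight s x N / (π * |ξ|) := hlim
    _ ≤ 2 * (2 / (|x| ^ s + N ^ (s / 2))) / (π * |ξ|) := by
        gcongr
        exact koranyiWeight_le hs0 x hN
    _ = 4 / π / (|ξ| * (|x| ^ s + N ^ (s / 2))) := by
        field_simp
        norm_num
end
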